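/- arXiv:1802.10385 — 3 statements merged into one kernel-verified Lean document; each statement's English description precedes it below -/
import Mathlib

section
/- Let φ : B → A be a homomorphism of Artin algebras preserving identities such that 2 ≤ fd(φ) < ∞, where fd(φ) is the relative finitistic dimension of φ. Suppose that A has finite projective dimension as a left B-module (via φ) and that A is projective as a right B-module. If B is representation-finite, then the finitistic dimension of A is finite. -/
universe u

open TensorProduct

section Basic

variable (Λ : Type u) [Ring Λ]

/-- `ProjDimLE Λ n M` : the module `M` admits a projective resolution of length `≤ n`
by finitely generated projective `Λ`-modules. -/
def ProjDimLE : ℕ → ModuleCat.{u} Λ → Prop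
  | 0, M => Module.Projective Λ M
  | n + 1, M => ∃ (P : ModuleCat.{u} Λ) (g : P →ₗ[Λ] M),
      Module.Projective Λ P ∧ Module.Finite Λ P ∧ Function.Surjective g ∧
      ProjDimLE n (ModuleCat.of Λ (LinearMap.ker g))

/-- The finitistic dimension of `Λ` (computed on finitely generated modules) is finite. -/
def FinFinDim : Prop :=
  ∃ n : ℕ, ∀ M : ModuleCat.{u} Λ, Module.Finite Λ M →
    (∃ k : ℕ, ProjDimLE Λ k M) → ProjDimLE Λ n M

/-- A module is indecomposable. -/
def ModIndec (M : ModuleCat.{u} Λ) : Prop :=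
  Nontrivial M ∧ ∀ N₁ N₂ : Submodule Λ M, IsCompl N₁ N₂ → N₁ = ⊥ ∨ N₂ = ⊥

/-- A class of modules has only finitely many isomorphism classes of indecomposables. -/
def ClassRepFinite (C : ModuleCat.{u} Λ → Prop) : Prop :=
  ∃ (k : ℕ) (N : Fin k → ModuleCat.{u} Λ),
    ∀ M : ModuleCat.{u} Λ, C M → ModIndec Λ M → ∃ i, Nonempty (M ≃ₗ[Λ] N i)

/-- `Λ` is representation-finite. -/
def RepFinite : Prop :=
  ClassRepFinite Λ (fun M => Module.Finite Λ M)

/-- `X` belongs to `add N`: it is a direct summand of a finite direct sum of copies of `N`. -/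
def InAdd (N X : ModuleCat.{u} Λ) : Prop :=
  ∃ (k : ℕ) (i : X →ₗ[Λ] (Fin k → N)) (p : (Fin k → N) →ₗ[Λ] X),
    p.comp i = LinearMap.id

/-- A submodule is superfluous (small). -/
def IsSuperfluous {M : ModuleCat.{u} Λ} (N : Submodule Λ M) : Prop :=
  ∀ L : Submodule Λ M, L ⊔ N = ⊤ → L = ⊤

/-- `K` is (isomorphic to) the kernel of a projective cover of `M`, i.e. a first syzygy. -/
def IsSyzygyOf (K M : ModuleCat.{u} Λ) : Prop :=
  ∃ (P : ModuleCat.{u} Λ) (g : P →ₗ[Λ] M), Module.Projective Λ P ∧ Module.Finite Λ P ∧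
    Function.Surjective g ∧ IsSuperfluous Λ (LinearMap.ker g) ∧
    Nonempty (K ≃ₗ[Λ] LinearMap.ker g)

/-- `K` is an `n`-th syzygy of `M`. -/
def IsNthSyzygy : ℕ → ModuleCat.{u} Λ → ModuleCat.{u} Λ → Prop
  | 0, K, M => Nonempty (K ≃ₗ[Λ] M)
  | n + 1, K, M => ∃ K' : ModuleCat.{u} Λ, IsNthSyzygy n K' M ∧ IsSyzygyOf Λ K K'

/-- A class `C` of modules is `m`-syzygy-finite. -/
def MSyzygyFiniteClass (m : ℕ) (C : ModuleCat.{u} Λ → Prop) : Prop :=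
  ∃ N : ModuleCat.{u} Λ, Module.Finite Λ N ∧
    ∀ X, C X → ∀ K, IsNthSyzygy Λ m K X → InAdd Λ N K

/-- A class `C` of modules is syzygy-finite. -/
def SyzygyFiniteClass (C : ModuleCat.{u} Λ → Prop) : Prop :=
  ∃ m : ℕ, MSyzygyFiniteClass Λ m C

/-- `Λ` is 1-syzygy-finite. -/
def OneSyzygyFinite : Prop :=
  MSyzygyFiniteClass Λ 1 (fun X => Module.Finite Λ X)

/-- `Λ` is syzygy-finite. -/
def AlgSyzygyFinite : Prop :=
  SyzygyFiniteClass Λ (fun X => Module.Finite Λ X)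

/-- The Jacobson radical of `Λ` (intersection of the maximal left ideals). -/
def jacobsonRad : Ideal Λ := sInf {I : Ideal Λ | I.IsMaximal}

end Basic

/-- The Jacobson radical of a subalgebra, as a subset of the ambient algebra. -/
def radSet {R A : Type u} [CommRing R] [Ring A] [Algebra R A] (S : Subalgebra R A) : Set A :=
  Subtype.val '' ((jacobsonRad ↥S : Ideal ↥S) : Set ↥S)

section Rel

variable {R : Type u} [CommRing R] {B A : Type u} [Ring B] [Ring A]
  [Algebra R B] [Algebra R A] (φ : B →ₐ[R] A)

/-- The tensor product `A ⊗_B X` of the (A,B)-bimodule `A` with a left `A`-module `X`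
(viewed as a `B`-module via `φ`), realized as a quotient of `A ⊗_R X`. -/
noncomputable def relTensor (X : ModuleCat.{u} A) : ModuleCat.{u} A :=
  letI : Module R X := Module.compHom X (algebraMap R A)
  ModuleCat.of A ((A ⊗[R] X) ⧸ Submodule.span A
    {z : A ⊗[R] X | ∃ (a : A) (b : B) (x : X),
      z = (a * φ b) ⊗ₜ[R] x - a ⊗ₜ[R] (φ b • x)})

/-- `X` is `(A,B)`-projective: a direct summand of `A ⊗_B X`. -/
noncomputable def RelProjective (X : ModuleCat.{u} A) : Prop :=
  ∃ (i : X →ₗ[A] relTensor φ X) (p : relTensor φ X →ₗ[A] X), p.comp i = LinearMap.id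

/-- The map `g` admits a `B`-linear map `h` with `g ∘ h ∘ g = g`
(this encodes `(A,B)`-exactness of the corresponding short exact sequence). -/
def RelSplitB {P X : ModuleCat.{u} A} (g : P →ₗ[A] X) : Prop :=
  ∃ h : X →+ P, (∀ (b : B) (x : X), h (φ b • x) = φ b • h x) ∧
    ∀ p : P, g (h (g p)) = g p

/-- `RelProjDimLE φ n X` : `X` has an `(A,B)`-exact resolution of length `≤ n` by
finitely generated `(A,B)`-projective modules, i.e. relative projective dimension `≤ n`. -/
noncomputable def RelProjDimLE : ℕ → ModuleCat.{u} A → Prop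
  | 0, X => RelProjective φ X
  | n + 1, X => ∃ (P : ModuleCat.{u} A) (g : P →ₗ[A] X),
      RelProjective φ P ∧ Module.Finite A P ∧ Function.Surjective g ∧ RelSplitB φ g ∧
      RelProjDimLE n (ModuleCat.of A (LinearMap.ker g))

/-- Restriction of scalars along `φ` of an `A`-module, as an object of `ModuleCat B`. -/
def resMod (X : ModuleCat.{u} A) : ModuleCat.{u} B :=
  @ModuleCat.of B _ X _ (Module.compHom X φ.toRingHom)

/-- The right `B`-module structure on `A` induced by `φ`. -/
def rightModB : Module Bᵐᵒᵖ A :=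
  Module.compHom A (RingHom.op φ.toRingHom)

end Rel

section ProjectiveDimension

open CategoryTheory

variable (Λ : Type u) [Ring Λ]

/-- The module `M` has projective dimension at most `n`, in the sense of vanishing of `Ext`. -/
abbrev PdLE (n : ℕ) (M : Type u) [AddCommGroup M] [Module Λ M] : Prop :=
  HasProjectiveDimensionLE (ModuleCat.of Λ M) n

variable {Λ} {M N L : Type u} [AddCommGroup M] [Module Λ M] [AddCommGroup N] [Module Λ N]
  [AddCommGroup L] [Module Λ L] {n : ℕ}

theorem pdLE_zero_iff : PdLE Λ 0 M ↔ Module.Projective Λ M := by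
  rw [IsProjective.iff_projective, projective_iff_hasProjectiveDimensionLE_zero]

theorem PdLE.mono {m : ℕ} (h : PdLE Λ n M) (hnm : n ≤ m) : PdLE Λ m M :=
  hasProjectiveDimensionLT_of_ge (h := by lia) (m := m + 1) (n := n + 1) _

theorem PdLE.of_projective [h : Module.Projective Λ M] : PdLE Λ n M :=
  (pdLE_zero_iff.2 h).mono n.zero_le

theorem PdLE.retract (h : PdLE Λ n M) (i : N →ₗ[Λ] M) (p : M →ₗ[Λ] N)
    (hpi : p.comp i = LinearMap.id) : PdLE Λ n N :=
  let r : Retract (ModuleCat.of Λ N) (ModuleCat.of Λ M) :=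
    { i := ModuleCat.ofHom i
      r := ModuleCat.ofHom p
      retract := by rw [← ModuleCat.ofHom_comp, hpi]; rfl }
  r.hasProjectiveDimensionLT (n + 1)

theorem PdLE.equiv (h : PdLE Λ n M) (e : N ≃ₗ[Λ] M) : PdLE Λ n N :=
  h.retract e.toLinearMap e.symm.toLinearMap (by ext; simp)

section Exact

variable {f : M →ₗ[Λ] N} {g : N →ₗ[Λ] L} (hf : Function.Injective f) (hg : Function.Surjective g)
  (H : Function.Exact f g)
include hf hg H

theorem shortExact_of_linearMap :
    (ModuleCat.shortComplexOfCompEqZero f g H.linearMap_comp_eq_zero).ShortExact :=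
  ModuleCat.shortComplex_shortExact _ H hf hg

theorem PdLE.middle (h₁ : PdLE Λ n M) (h₃ : PdLE Λ n L) : PdLE Λ n N :=
  (shortExact_of_linearMap hf hg H).hasProjectiveDimensionLT_X₂ (n + 1) h₁ h₃

theorem PdLE.right (h₁ : PdLE Λ n M) (h₂ : PdLE Λ (n + 1) N) : PdLE Λ (n + 1) L :=
  (shortExact_of_linearMap hf hg H).hasProjectiveDimensionLT_X₃ (n + 1) h₁ h₂

theorem PdLE.left (h₂ : PdLE Λ n N) (h₃ : PdLE Λ (n + 1) L) : PdLE Λ n M :=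
  (shortExact_of_linearMap hf hg H).hasProjectiveDimensionLT_X₁ (n + 1) h₂ h₃

end Exact

theorem PdLE.prod (h₁ : PdLE Λ n M) (h₂ : PdLE Λ n N) : PdLE Λ n (M × N) :=
  PdLE.middle (f := LinearMap.inl Λ M N) (g := LinearMap.snd Λ M N) LinearMap.inl_injective
    LinearMap.snd_surjective Function.Exact.inl_snd h₁ h₂

theorem LinearMap.exact_subtype_ker (g : N →ₗ[Λ] L) :
    Function.Exact (LinearMap.ker g).subtype g := fun x => by simp

theorem ProjDimLE.pdLE {n : ℕ} {M : ModuleCat.{u} Λ} (h : ProjDimLE Λ n M) : PdLE Λ n M := by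
  induction n generalizing M with
  | zero => exact pdLE_zero_iff.2 h
  | succ n ih =>
    obtain ⟨P, g, hP, -, hg, hK⟩ := h
    exact PdLE.right (Submodule.injective_subtype _) hg g.exact_subtype_ker (ih hK)
      PdLE.of_projective

theorem PdLE.projDimLE [IsNoetherianRing Λ] {n : ℕ} {M : ModuleCat.{u} Λ} [Module.Finite Λ M]
    (h : PdLE Λ n M) : ProjDimLE Λ n M := by
  induction n generalizing M with
  | zero => exact pdLE_zero_iff.1 h
  | succ n ih =>
    obtain ⟨k, g, hg⟩ := Module.Finite.exists_fin' Λ M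
    refine ⟨ModuleCat.of Λ (Fin k → Λ), g, inferInstanceAs (Module.Projective Λ (Fin k → Λ)),
      inferInstanceAs (Module.Finite Λ (Fin k → Λ)), hg, ?_⟩
    have : IsNoetherian Λ (Fin k → Λ) := inferInstance
    have : Module.Finite Λ (ModuleCat.of Λ (LinearMap.ker g)) :=
      inferInstanceAs (Module.Finite Λ (LinearMap.ker g))
    exact ih (PdLE.left (Submodule.injective_subtype _) hg g.exact_subtype_ker
      PdLE.of_projective h)

/-- A bound on the finite projective dimensions of indecomposable modules bounds the finite
projective dimensions of all modules of finite length. -/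
theorem PdLE.of_indecomposable [IsArtinianRing Λ] {f : ℕ}
    (hf : ∀ M : ModuleCat.{u} Λ, Module.Finite Λ M → ModIndec Λ M →
      (∃ k, PdLE Λ k M) → PdLE Λ f M)
    (M : Type u) [AddCommGroup M] [Module Λ M] [Module.Finite Λ M] (hM : ∃ k, PdLE Λ k M) :
    PdLE Λ f M := by
  generalize hl : Module.length Λ M = l
  induction l using WellFoundedLT.induction generalizing M with
  | ind l ih =>
    subst hl
    by_cases hM0 : Nontrivial M
    · by_cases hind : ModIndec Λ (ModuleCat.of Λ M)
      · exact hf (ModuleCat.of Λ M) ‹_› hind hM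
      · simp only [ModIndec, not_and, not_forall, not_or] at hind
        obtain ⟨N₁, N₂, hN, h₁, h₂⟩ := hind hM0
        replace hN : IsCompl (α := Submodule Λ M) N₁ N₂ := hN
        obtain ⟨k, hk⟩ := hM
        have e := Submodule.prodEquivOfIsCompl (R := Λ) (E := M) N₁ N₂ hN
        have hk' := hk.equiv e
        have l₁ : Module.length Λ N₁ < Module.length Λ M :=
          Submodule.length_lt fun h => h₂ (by simpa [h] using hN.disjoint)
        have l₂ : Module.length Λ N₂ < Module.length Λ M :=
          Submodule.length_lt fun h => h₁ (by simpa [h] using hN.disjoint)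
        exact ((ih _ l₁ N₁ ⟨k, hk'.retract (LinearMap.inl ..) (LinearMap.fst ..) (by ext; simp)⟩
          rfl).prod (ih _ l₂ N₂ ⟨k, hk'.retract (LinearMap.inr ..) (LinearMap.snd ..)
            (by ext; simp)⟩ rfl)).equiv e.symm
    · rw [not_nontrivial_iff_subsingleton] at hM0
      exact PdLE.of_projective

theorem RepFinite.exists_pdLE [IsArtinianRing Λ] (h : RepFinite Λ) :
    ∃ f, ∀ (M : Type u) [AddCommGroup M] [Module Λ M] [Module.Finite Λ M],
      (∃ k, PdLE Λ k M) → PdLE Λ f M := by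
  classical
  obtain ⟨k, N, hN⟩ := h
  have hb : ∀ i, ∃ d, (∃ k, PdLE Λ k (N i)) → PdLE Λ d (N i) := fun i => by
    by_cases hi : ∃ k, PdLE Λ k (N i)
    · exact ⟨hi.choose, fun _ => hi.choose_spec⟩
    · exact ⟨0, fun h => absurd h hi⟩
  choose d hd using hb
  refine ⟨Finset.univ.sup d, fun M _ _ _ => PdLE.of_indecomposable (fun M' hM' hind hfin => ?_) M⟩
  obtain ⟨i, ⟨e⟩⟩ := hN M' hM' hind
  obtain ⟨m, hm⟩ := hfin
  exact ((hd i ⟨m, hm.equiv e.symm⟩).mono (Finset.le_sup (Finset.mem_univ i))).equiv e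

end ProjectiveDimension

section Induction

variable {B A : Type u} [Ring B] [Ring A] (φ : B →+* A)
  {M N Z : Type u} [AddCommGroup M] [Module B M] [AddCommGroup N] [Module B N]
  [AddCommGroup Z] [Module A Z] {G : Type u} [AddCommGroup G]

variable (M) in
/-- The relations `aφ(b) ⊗ m = a ⊗ bm` defining `A ⊗_B M` as a quotient of `A ⊗_ℤ M`. -/
def inducedRel : Submodule A (A ⊗[ℤ] M) :=
  Submodule.span A {z | ∃ (a : A) (b : B) (m : M), z = (a * φ b) ⊗ₜ[ℤ] m - a ⊗ₜ[ℤ] (b • m)}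

variable (M) in
/-- The induced module `A ⊗_B M` of a left `B`-module `M`. -/
abbrev Induced : Type u := (A ⊗[ℤ] M) ⧸ inducedRel φ M

namespace Induced

/-- The pure tensor `a ⊗ m` in `A ⊗_B M`. -/
def tmul (a : A) (m : M) : Induced φ M := Submodule.Quotient.mk (a ⊗ₜ[ℤ] m)

theorem tmul_add (a : A) (m m' : M) : tmul φ a (m + m') = tmul φ a m + tmul φ a m' := by
  simp [tmul, TensorProduct.tmul_add]

theorem add_tmul (a a' : A) (m : M) : tmul φ (a + a') m = tmul φ a m + tmul φ a' m := by
  simp [tmul, TensorProduct.add_tmul]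

theorem smul_tmul (a a' : A) (m : M) : a • tmul φ a' m = tmul φ (a * a') m := rfl

theorem mul_tmul (a : A) (b : B) (m : M) : tmul φ (a * φ b) m = tmul φ a (b • m) :=
  (Submodule.Quotient.eq _).2 (Submodule.subset_span ⟨a, b, m, rfl⟩)

theorem tmul_zero (a : A) : tmul φ a (0 : M) = 0 := by
  simp [tmul]

theorem sum_tmul {ι : Type*} (s : Finset ι) (a : ι → A) (m : M) :
    tmul φ (∑ i ∈ s, a i) m = ∑ i ∈ s, tmul φ (a i) m :=
  map_sum (AddMonoidHom.mk' (fun a => tmul φ a m) fun a a' => add_tmul φ a a' m) _ _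

variable {φ} in
@[elab_as_elim]
theorem induction_on {p : Induced φ M → Prop} (z : Induced φ M)
    (tmul : ∀ a m, p (tmul φ a m)) (zero : p 0) (add : ∀ z z', p z → p z' → p (z + z')) : p z := by
  obtain ⟨z, rfl⟩ := Submodule.Quotient.mk_surjective _ z
  induction z with
  | zero => exact zero
  | tmul a m => exact tmul a m
  | add z z' h h' => exact add _ _ h h'

variable {φ} in
theorem hom_ext {f g : Induced φ M →+ G} (h : ∀ a m, f (tmul φ a m) = g (tmul φ a m)) :
    f = g := by
  ext z
  induction z using induction_on with
  | tmul a m => exact h a m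
  | zero => simp
  | add z z' hz hz' => simp [hz, hz']

/-- Additive maps out of `A ⊗_B M` from balanced biadditive maps. -/
def liftAdd (f : A →+ M →+ G) (hf : ∀ a b m, f (a * φ b) m = f a (b • m)) : Induced φ M →+ G :=
  QuotientAddGroup.lift (inducedRel φ M).toAddSubgroup
    (TensorProduct.liftAddHom f fun r a m => by rw [map_zsmul, map_zsmul]; rfl) <| by
    suffices h : ∀ z ∈ inducedRel φ M, ∀ a : A,
        TensorProduct.liftAddHom f (fun r a m => by rw [map_zsmul, map_zsmul]; rfl) (a • z) = 0 from
      fun z hz => by simpa using h z hz 1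
    intro z hz
    induction hz using Submodule.span_induction with
    | mem z hz =>
      obtain ⟨a', b, m, rfl⟩ := hz
      intro a
      simp [smul_sub, TensorProduct.smul_tmul', ← mul_assoc, hf]
    | zero => simp
    | add z z' _ _ h h' => intro a; rw [smul_add, map_add, h, h', add_zero]
    | smul c z _ h => intro a; rw [smul_smul, h]

@[simp]
theorem liftAdd_tmul (f : A →+ M →+ G) (hf : ∀ a b m, f (a * φ b) m = f a (b • m)) (a : A) (m : M) :
    liftAdd φ f hf (tmul φ a m) = f a m := rfl

/-- The `A`-linear map `a ⊗ m ↦ a • h m` induced by a `B`-linear map `h`. -/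
def lift (h : M →+ Z) (hh : ∀ b m, h (b • m) = φ b • h m) : Induced φ M →ₗ[A] Z :=
  let f := liftAdd φ
    (AddMonoidHom.mk' (fun a : A => (DistribSMul.toAddMonoidHom Z a).comp h)
      fun a a' => by ext; simp [add_smul])
    (fun a b m => by simp [mul_smul, hh])
  { f with
    map_smul' := fun a z => by
      change f (a • z) = a • f z
      induction z using induction_on with
      | tmul a' m => rw [smul_tmul]; simp [f, mul_smul]
      | zero => simp
      | add z z' hz hz' => simp [hz, hz'] }

@[simp]
theorem lift_tmul (h : M →+ Z) (hh : ∀ b m, h (b • m) = φ b • h m) (a : A) (m : M) :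
    lift φ h hh (tmul φ a m) = a • h m := rfl

/-- Functoriality of `A ⊗_B -`. -/
def map (f : M →ₗ[B] N) : Induced φ M →ₗ[A] Induced φ N :=
  lift φ (AddMonoidHom.mk' (fun m => tmul φ 1 (f m)) fun m m' => by rw [map_add, tmul_add])
    fun b m => by simp [smul_tmul, ← mul_tmul]

@[simp]
theorem map_tmul (f : M →ₗ[B] N) (a : A) (m : M) : map φ f (tmul φ a m) = tmul φ a (f m) := by
  simp [map, smul_tmul]

theorem map_surjective {f : M →ₗ[B] N} (hf : Function.Surjective f) :
    Function.Surjective (map φ f) := fun z => by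
  induction z using induction_on with
  | tmul a m => obtain ⟨m, rfl⟩ := hf m; exact ⟨tmul φ a m, by simp⟩
  | zero => exact ⟨0, by simp⟩
  | add z z' hz hz' =>
    obtain ⟨w, rfl⟩ := hz
    obtain ⟨w', rfl⟩ := hz'
    exact ⟨w + w', by simp⟩

instance [Module.Finite B M] : Module.Finite A (Induced φ M) := by
  obtain ⟨s, hs⟩ := Module.Finite.fg_top (R := B) (M := M)
  classical
  refine ⟨⟨s.image (tmul φ 1), ?_⟩⟩
  rw [Finset.coe_image, eq_top_iff]
  have key : ∀ m : M, tmul φ 1 m ∈ Submodule.span A (tmul φ 1 '' (s : Set M)) := fun m => by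
    have hm : m ∈ Submodule.span B (s : Set M) := hs ▸ Submodule.mem_top
    induction hm using Submodule.span_induction with
    | mem m hm => exact Submodule.subset_span ⟨m, hm, rfl⟩
    | zero => simp [tmul_zero]
    | add m m' _ _ h h' => rw [tmul_add]; exact add_mem h h'
    | smul b m _ h =>
      rw [← mul_tmul, one_mul, ← mul_one (φ b), ← smul_tmul]
      exact Submodule.smul_mem _ _ h
  rintro z -
  induction z using induction_on with
  | tmul a m => rw [← mul_one a, ← smul_tmul]; exact Submodule.smul_mem _ _ (key m)
  | zero => exact zero_mem _
  | add z z' hz hz' => exact add_mem hz hz'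

/-- Induction preserves projective modules, being left adjoint to an exact functor. -/
theorem projective [Module.Projective B M] : Module.Projective A (Induced φ M) := by
  refine Module.Projective.of_lifting_property'' fun f hf => ?_
  let : Module B (Induced φ M →₀ A) := Module.compHom _ φ
  let : Module B (Induced φ M) := Module.compHom _ φ
  let f' : (Induced φ M →₀ A) →ₗ[B] Induced φ M :=
    { f with map_smul' := fun b z => f.map_smul (φ b) z }
  let η : M →ₗ[B] Induced φ M :=
    { toFun := tmul φ 1
      map_add' := tmul_add φ 1
      map_smul' := fun b m => by
        change _ = φ b • tmul φ 1 m
        rw [smul_tmul, ← mul_tmul, one_mul, mul_one] }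
  obtain ⟨h, hh⟩ := Module.projective_lifting_property f' η hf
  refine ⟨lift φ h.toAddMonoidHom fun b m => h.map_smul b m, ?_⟩
  refine LinearMap.toAddMonoidHom_injective (hom_ext fun a m => ?_)
  have : f (h m) = tmul φ 1 m := LinearMap.congr_fun hh m
  change f (a • h m) = tmul φ a m
  rw [map_smul, this, smul_tmul, mul_one]

section DualBasis

variable {φ} {ι : Type*} [Fintype ι] {e : ι → A} {s : ι → A →+ B}
  (hs : ∀ i a b, s i (a * φ b) = s i a * b) (he : ∀ a, ∑ i, e i * φ (s i a) = a)

/-- The coordinate `a ⊗ m ↦ s a • m` for a right `B`-linear form `s` on `A`. -/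
def coord (t : A →+ B) (ht : ∀ a b, t (a * φ b) = t a * b) : Induced φ M →+ M :=
  liftAdd φ (AddMonoidHom.mk' (fun a => DistribSMul.toAddMonoidHom M (t a))
    fun a a' => by ext; simp [add_smul]) fun a b m => by simp [ht, mul_smul]

@[simp]
theorem coord_tmul (t : A →+ B) (ht : ∀ a b, t (a * φ b) = t a * b) (a : A) (m : M) :
    coord t ht (tmul φ a m) = t a • m := rfl

theorem coord_map (t : A →+ B) (ht : ∀ a b, t (a * φ b) = t a * b) (f : M →ₗ[B] N)
    (z : Induced φ M) : coord t ht (map φ f z) = f (coord t ht z) := by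
  induction z using induction_on with
  | tmul a m => simp
  | zero => simp
  | add z z' hz hz' => simp [hz, hz']

include he in
theorem sum_tmul_coord (z : Induced φ M) : ∑ i, tmul φ (e i) (coord (s i) (hs i) z) = z := by
  induction z using induction_on with
  | tmul a m =>
    conv_rhs => rw [← he a]
    simp [← mul_tmul, sum_tmul]
  | zero => simp [tmul_zero]
  | add z z' hz hz' =>
    conv_rhs => rw [← hz, ← hz']
    simp [tmul_add, Finset.sum_add_distrib]

include hs he in
theorem map_injective {f : M →ₗ[B] N} (hf : Function.Injective f) :
    Function.Injective (map φ f) := by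
  intro z z' h
  rw [← sum_tmul_coord hs he z, ← sum_tmul_coord hs he z']
  refine Finset.sum_congr rfl fun i _ => congrArg _ (hf ?_)
  rw [← coord_map, ← coord_map, h]

include hs he in
theorem map_exact_ker (f : M →ₗ[B] N) :
    Function.Exact (map φ (LinearMap.ker f).subtype) (map φ f) := by
  intro z
  constructor
  · intro hz
    have hk : ∀ i, coord (s i) (hs i) z ∈ LinearMap.ker f := fun i => by
      rw [LinearMap.mem_ker, ← coord_map, hz, map_zero]
    refine ⟨∑ i, tmul φ (e i) ⟨_, hk i⟩, ?_⟩
    simpa using sum_tmul_coord hs he z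
  · rintro ⟨z, rfl⟩
    induction z using induction_on with
    | tmul a m => simp [tmul_zero]
    | zero => simp
    | add z z' hz hz' => simp [hz, hz']

include hs he in
/-- If `A` is projective as a right `B`-module, induction does not raise projective dimension. -/
theorem pdLE {n : ℕ} {M : ModuleCat.{u} B} (h : ProjDimLE B n M) : PdLE A n (Induced φ M) := by
  induction n generalizing M with
  | zero =>
    have : Module.Projective B M := h
    exact pdLE_zero_iff.2 (projective φ)
  | succ n ih =>
    obtain ⟨P, g, hP, -, hg, hK⟩ := h
    have := projective (M := P) φ
    exact PdLE.right (map_injective hs he (Submodule.injective_subtype _)) (map_surjective φ hg)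
      (map_exact_ker hs he g) (ih hK) PdLE.of_projective

end DualBasis

end Induced

end Induction

section Restriction

variable {R : Type u} [CommRing R] {B A : Type u} [Ring B] [Ring A]
  [Algebra R B] [Algebra R A] (φ : B →ₐ[R] A)

/-- Restriction of scalars of an `A`-linear map along `φ`. -/
def resMap {X Y : ModuleCat.{u} A} (f : X →ₗ[A] Y) : resMod φ X →ₗ[B] resMod φ Y :=
  { f with map_smul' := fun b x => f.map_smul (φ b) x }

theorem PdLE.pi {Λ : Type u} [Ring Λ] {M : Type u} [AddCommGroup M] [Module Λ M] {d : ℕ}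
    (h : PdLE Λ d M) (n : ℕ) : PdLE Λ d (Fin n → M) := by
  induction n with
  | zero => exact PdLE.of_projective
  | succ n ih => exact (h.prod ih).equiv (Fin.consLinearEquiv Λ fun _ => M).symm

theorem ProjDimLE.pdLE_resMod [IsNoetherianRing A] {d k : ℕ}
    (hd : PdLE B d (resMod φ (ModuleCat.of A A))) {X : ModuleCat.{u} A} [Module.Finite A X]
    (hX : ProjDimLE A k X) : PdLE B (d + k) (resMod φ X) := by
  induction k generalizing X with
  | zero =>
    have : Module.Projective A X := hX
    obtain ⟨n, g, hg⟩ := Module.Finite.exists_fin' A X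
    obtain ⟨i, hi⟩ := Module.projective_lifting_property g LinearMap.id hg
    let e : resMod φ (ModuleCat.of A (Fin n → A)) ≃ₗ[B] (Fin n → resMod φ (ModuleCat.of A A)) :=
      { AddEquiv.refl _ with map_smul' := fun _ _ => rfl }
    refine ((hd.pi n).equiv e).retract (resMap φ (Y := ModuleCat.of A (Fin n → A)) i)
      (resMap φ (X := ModuleCat.of A (Fin n → A)) g) ?_
    ext x
    exact LinearMap.congr_fun hi x
  | succ k ih =>
    obtain ⟨P, g, hP, hPf, hg, hK⟩ := hX
    have hKf : Module.Finite A (ModuleCat.of A (LinearMap.ker g)) :=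
      inferInstanceAs (Module.Finite A (LinearMap.ker g))
    have hP' : ProjDimLE A k P := PdLE.projDimLE PdLE.of_projective
    exact PdLE.right
      (f := resMap φ (X := ModuleCat.of A (LinearMap.ker g)) (LinearMap.ker g).subtype)
      (g := resMap φ g) (Submodule.injective_subtype _) hg g.exact_subtype_ker (ih hK)
      ((ih hP').mono (by lia))

theorem finite_resMod [Module.Finite R A] (X : ModuleCat.{u} A) [Module.Finite A X] :
    Module.Finite B (resMod φ X) := by
  let : Module R X := Module.compHom X (algebraMap R A)
  have : IsScalarTower R A X := IsScalarTower.of_algebraMap_smul fun _ _ => rfl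
  have hX : Module.Finite R X := Module.Finite.trans A X
  let : Module R (resMod φ X) := ‹Module R X›
  have : IsScalarTower R B (resMod φ X) := IsScalarTower.of_algebraMap_smul fun r x => by
    change φ (algebraMap R B r) • (show X from x) = algebraMap R A r • (show X from x)
    rw [φ.commutes]
  have : Module.Finite R (resMod φ X) := hX
  exact Module.Finite.of_restrictScalars_finite R B _

theorem exists_dualBasis [Module.Finite R A]
    (h : @Module.Projective Bᵐᵒᵖ _ A _ (rightModB φ)) :
    ∃ (n : ℕ) (e : Fin n → A) (s : Fin n → A →+ B),
      (∀ i a b, s i (a * φ b) = s i a * b) ∧ ∀ a, ∑ i, e i * φ (s i a) = a := by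
  let : Module Bᵐᵒᵖ A := rightModB φ
  have smul_def : ∀ (b : Bᵐᵒᵖ) (a : A), b • a = a * φ b.unop := fun _ _ => rfl
  have : IsScalarTower R Bᵐᵒᵖ A := IsScalarTower.of_algebraMap_smul fun r a => by
    rw [smul_def, MulOpposite.algebraMap_apply, MulOpposite.unop_op, φ.commutes,
      ← Algebra.commutes, Algebra.smul_def]
  have : Module.Finite Bᵐᵒᵖ A := Module.Finite.of_restrictScalars_finite R Bᵐᵒᵖ A
  obtain ⟨n, g, hg⟩ := Module.Finite.exists_fin' Bᵐᵒᵖ A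
  obtain ⟨i, hi⟩ := Module.projective_lifting_property g LinearMap.id hg
  refine ⟨n, fun j => g (Pi.single j 1),
    fun j => AddMonoidHom.mk' (fun a => (i a j).unop) fun a a' => by simp, fun j a b => ?_,
    fun a => ?_⟩
  · have := i.map_smul (MulOpposite.op b) a
    rw [smul_def] at this
    simp only [MulOpposite.unop_op] at this
    simp [this]
  · have ha : g (i a) = a := LinearMap.congr_fun hi a
    conv_rhs => rw [← ha, ← Finset.univ_sum_single (i a), map_sum]
    refine Finset.sum_congr rfl fun j _ => ?_
    change i a j • g (Pi.single j 1) = _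
    rw [← map_smul, ← Pi.single_smul, smul_eq_mul, mul_one]

end Restriction

section RelativeProjective

variable {R : Type u} [CommRing R] {B A : Type u} [Ring B] [Ring A]
  [Algebra R B] [Algebra R A] (φ : B →ₐ[R] A)

/-- The lifting property of `X` against surjections which split over `B`. -/
def HasRelLifting (X : Type u) [AddCommGroup X] [Module A X] : Prop :=
  ∀ ⦃P Y : ModuleCat.{u} A⦄ (g : P →ₗ[A] Y), Function.Surjective g → RelSplitB φ g →
    ∀ f : X →ₗ[A] Y, ∃ l : X →ₗ[A] P, g.comp l = f

/-- `A ⊗_B X` for an `A`-module `X`. -/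
abbrev IndRes (X : ModuleCat.{u} A) : ModuleCat.{u} A :=
  ModuleCat.of A (Induced φ.toRingHom (resMod φ X))

/-- The counit `A ⊗_B X → X`. -/
def indResCounit (X : ModuleCat.{u} A) : IndRes φ X →ₗ[A] X :=
  Induced.lift φ.toRingHom (M := resMod φ X) (AddMonoidHom.id X) fun _ _ => rfl

theorem indResCounit_tmul {X : ModuleCat.{u} A} (a : A) (x : X) :
    indResCounit φ X (Induced.tmul φ.toRingHom (M := resMod φ X) a x) = a • x := rfl

theorem indResCounit_surjective (X : ModuleCat.{u} A) :
    Function.Surjective (indResCounit φ X) := fun x =>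
  ⟨Induced.tmul φ.toRingHom (M := resMod φ X) 1 x, by rw [indResCounit_tmul, one_smul]⟩

theorem relSplitB_indResCounit (X : ModuleCat.{u} A) : RelSplitB φ (indResCounit φ X) := by
  refine ⟨AddMonoidHom.mk' (fun x => Induced.tmul φ.toRingHom (M := resMod φ X) 1 x)
    fun x y => Induced.tmul_add (M := resMod φ X) φ.toRingHom 1 x y, fun b x => ?_, fun z => ?_⟩
  · refine (Induced.mul_tmul (M := resMod φ X) φ.toRingHom 1 b x).symm.trans ?_
    rw [one_mul, ← mul_one (φ.toRingHom b)]
    rfl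
  · exact (indResCounit_tmul φ 1 _).trans (one_smul _ _)

theorem hasRelLifting_indRes (X : ModuleCat.{u} A) : HasRelLifting φ (IndRes φ X) := by
  intro P Y g hg ⟨h, hhB, hh⟩ f
  let η : resMod φ X →+ Y := AddMonoidHom.mk'
    (fun x => f (Induced.tmul φ.toRingHom (M := resMod φ X) 1 x))
    fun x y => by rw [Induced.tmul_add, map_add]
  have hη : ∀ (b : B) (x : resMod φ X), η (b • x) = φ b • η x := fun b x => by
    change f _ = φ b • f _
    rw [← map_smul, ← Induced.mul_tmul, Induced.smul_tmul, one_mul, mul_one]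
    rfl
  refine ⟨Induced.lift φ.toRingHom (h.comp η) fun b x => ?_,
    LinearMap.toAddMonoidHom_injective (Induced.hom_ext fun a x => ?_)⟩
  · exact (congrArg h (hη b x)).trans (hhB b _)
  · change g (a • h (f (Induced.tmul φ.toRingHom (M := resMod φ X) 1 x))) =
      f (Induced.tmul φ.toRingHom (M := resMod φ X) a x)
    obtain ⟨p, hp⟩ := hg (f (Induced.tmul φ.toRingHom (M := resMod φ X) 1 x))
    rw [map_smul, ← hp, hh, hp, ← map_smul, Induced.smul_tmul, mul_one]

theorem hasRelLifting_relTensor (X : ModuleCat.{u} A) : HasRelLifting φ (relTensor φ X) := by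
  intro P Y g hg ⟨h, hhB, hh⟩ f
  let : Module R X := Module.compHom X (algebraMap R A)
  let : Module R P := Module.compHom P (algebraMap R A)
  have : IsScalarTower R A P := IsScalarTower.of_algebraMap_smul fun _ _ => rfl
  let S : Submodule A (A ⊗[R] X) := Submodule.span A
    {z : A ⊗[R] X | ∃ (a : A) (b : B) (x : X),
      z = (a * φ b) ⊗ₜ[R] x - a ⊗ₜ[R] (φ b • x)}
  let f' : (A ⊗[R] X ⧸ S) →ₗ[A] Y := f
  have hη : ∀ (b : B) (x : X), f' (S.mkQ (1 ⊗ₜ (φ b • x))) = φ b • f' (S.mkQ (1 ⊗ₜ x)) :=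
    fun b x => by
      rw [← map_smul, ← map_smul, TensorProduct.smul_tmul', smul_eq_mul, mul_one]
      congr 1
      symm
      refine (Submodule.Quotient.eq _).2 (Submodule.subset_span ⟨1, b, x, ?_⟩)
      rw [one_mul]
  let η : X →ₗ[R] P :=
    { toFun := fun x => h (f' (S.mkQ (1 ⊗ₜ x)))
      map_add' := fun x y => by simp only [TensorProduct.tmul_add, map_add]
      map_smul' := fun r x => by
        change h (f' (S.mkQ (1 ⊗ₜ (algebraMap R A r • x)))) = algebraMap R A r • _
        rw [← φ.commutes, hη, hhB] }
  let L : A ⊗[R] X →ₗ[A] P := TensorProduct.AlgebraTensorModule.lift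
    (LinearMap.toSpanSingleton A (X →ₗ[R] P) η)
  have hL : ∀ a x, L (a ⊗ₜ x) = a • h (f' (S.mkQ (1 ⊗ₜ x))) := fun a x => rfl
  have hS : S ≤ LinearMap.ker L := Submodule.span_le.2 <| by
    rintro _ ⟨a, b, x, rfl⟩
    rw [SetLike.mem_coe, LinearMap.mem_ker, map_sub, hL, hL, hη, hhB, mul_smul, sub_self]
  refine ⟨S.liftQ L hS, Submodule.linearMap_qext _ (LinearMap.ext fun z => ?_)⟩
  change g (L z) = f' (S.mkQ z)
  induction z with
  | zero => simp
  | add z z' hz hz' => simp only [map_add, hz, hz']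
  | tmul a x =>
    obtain ⟨p, hp⟩ := hg (f' (S.mkQ (1 ⊗ₜ x)))
    rw [hL, map_smul, ← hp, hh, hp, ← map_smul, ← map_smul, TensorProduct.smul_tmul', smul_eq_mul,
      mul_one]

variable {φ}

theorem HasRelLifting.retract {X Y : Type u} [AddCommGroup X] [Module A X] [AddCommGroup Y]
    [Module A Y] (h : HasRelLifting φ Y) (i : X →ₗ[A] Y) (p : Y →ₗ[A] X)
    (hpi : p.comp i = LinearMap.id) : HasRelLifting φ X := by
  intro P Z g hg hs f
  obtain ⟨l, hl⟩ := h g hg hs (f.comp p)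
  exact ⟨l.comp i, by rw [← LinearMap.comp_assoc, hl, LinearMap.comp_assoc, hpi,
    LinearMap.comp_id]⟩

theorem HasRelLifting.prod {X Y : Type u} [AddCommGroup X] [Module A X] [AddCommGroup Y]
    [Module A Y] (hX : HasRelLifting φ X) (hY : HasRelLifting φ Y) : HasRelLifting φ (X × Y) := by
  intro P Z g hg hs f
  obtain ⟨l, hl⟩ := hX g hg hs (f.comp (LinearMap.inl A X Y))
  obtain ⟨m, hm⟩ := hY g hg hs (f.comp (LinearMap.inr A X Y))
  exact ⟨l.coprod m, by rw [LinearMap.comp_coprod, hl, hm, LinearMap.coprod_comp_inl_inr]⟩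

theorem RelProjective.hasRelLifting {X : ModuleCat.{u} A} (h : RelProjective φ X) :
    HasRelLifting φ X := by
  obtain ⟨i, p, hpi⟩ := h
  exact (hasRelLifting_relTensor φ X).retract i p hpi

/-- A relative Schanuel lemma: if `X` is a direct summand of `Y ⊕ Q` with `Q` relatively
projective, then the kernel of `A ⊗_B X → X` is a direct summand of the direct sum of
`A ⊗_B X` and any relative syzygy of `Y`. -/
theorem exists_retract_ker_indResCounit {X Y P : ModuleCat.{u} A} {Q : Type u} [AddCommGroup Q]
    [Module A Q] (hQ : HasRelLifting φ Q) (hP : HasRelLifting φ P) (i : X →ₗ[A] Y × Q)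
    (p : Y × Q →ₗ[A] X) (hpi : p.comp i = LinearMap.id) (g : P →ₗ[A] Y)
    (hg : Function.Surjective g) (hs : RelSplitB φ g) :
    ∃ (i' : LinearMap.ker (indResCounit φ X) →ₗ[A] LinearMap.ker g × IndRes φ X)
      (p' : LinearMap.ker g × IndRes φ X →ₗ[A] LinearMap.ker (indResCounit φ X)),
      p'.comp i' = LinearMap.id := by
  set ε := indResCounit φ X
  have hεs : RelSplitB φ ε := relSplitB_indResCounit φ X
  have hεg : Function.Surjective ε := indResCounit_surjective φ X
  obtain ⟨α, hα⟩ := hasRelLifting_indRes φ X g hg hs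
    ((LinearMap.fst A Y Q).comp (i.comp ε))
  obtain ⟨β, hβ⟩ := hP ε hεg hεs ((p.comp (LinearMap.inl A Y Q)).comp g)
  obtain ⟨γ, hγ⟩ := hQ ε hεg hεs (p.comp (LinearMap.inr A Y Q))
  replace hα : ∀ t, g (α t) = (i (ε t)).1 := LinearMap.congr_fun hα
  replace hβ : ∀ t, ε (β t) = p (g t, 0) := LinearMap.congr_fun hβ
  replace hγ : ∀ t, ε (γ t) = p (0, t) := LinearMap.congr_fun hγ
  replace hpi : ∀ x, p (i x) = x := LinearMap.congr_fun hpi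
  let δ : IndRes φ X →ₗ[A] IndRes φ X := LinearMap.id -
    (β.comp α + γ.comp ((LinearMap.snd A Y Q).comp (i.comp ε)))
  have hδ : ∀ t, δ t = t - (β (α t) + γ (i (ε t)).2) := fun t => rfl
  have hεδ : ∀ t, ε (δ t) = 0 := fun t => by
    rw [hδ, map_sub, map_add, hβ, hγ, hα, ← map_add, Prod.mk_add_mk, add_zero, zero_add,
      Prod.mk.eta, hpi, sub_self]
  refine ⟨((α.comp (LinearMap.ker ε).subtype).codRestrict (LinearMap.ker g) fun k => ?_).prod
    (LinearMap.ker ε).subtype,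
    ((β.comp (LinearMap.ker g).subtype).coprod δ).codRestrict (LinearMap.ker ε) fun x => ?_, ?_⟩
  · have : ε k = 0 := k.2
    change g (α k) = 0
    rw [hα, this, map_zero, Prod.fst_zero]
  · have : g x.1 = 0 := x.1.2
    change ε (β x.1 + δ x.2) = 0
    rw [map_add, hβ, hεδ, this, add_zero]
    exact map_zero p
  · ext k
    have : ε k = 0 := k.2
    change β (α k) + δ k = k
    rw [hδ, this, map_zero, Prod.snd_zero, map_zero, add_zero, add_sub_cancel]

theorem RelProjDimLE.pdLE [IsNoetherianRing A] {f : ℕ}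
    (hfin : ∀ X : ModuleCat.{u} A, Module.Finite A X → Module.Finite A (IndRes φ X))
    (hf : ∀ X : ModuleCat.{u} A, Module.Finite A X → (∃ k, PdLE A k X) → PdLE A f (IndRes φ X))
    {n : ℕ} {X Y : ModuleCat.{u} A} [Module.Finite A X] {Q : Type u} [AddCommGroup Q] [Module A Q]
    (hY : RelProjDimLE φ n Y) (hX : ∃ k, PdLE A k X) (hQ : HasRelLifting φ Q)
    (i : X →ₗ[A] Y × Q) (p : Y × Q →ₗ[A] X) (hpi : p.comp i = LinearMap.id) :
    PdLE A (f + n) X := by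
  induction n generalizing X Y Q with
  | zero =>
    have hX' := ((RelProjective.hasRelLifting hY).prod hQ).retract i p hpi
    obtain ⟨l, hl⟩ := hX' _ (indResCounit_surjective φ X) (relSplitB_indResCounit φ X) LinearMap.id
    exact (hf X ‹_› hX).retract l _ hl
  | succ n ih =>
    obtain ⟨P, g, hP, -, hg, hs, hK⟩ := hY
    obtain ⟨i', p', hpi'⟩ := exists_retract_ker_indResCounit hQ hP.hasRelLifting i p hpi g hg hs
    have hT := hf X ‹_› hX
    have := hfin X ‹_›
    have hKf : Module.Finite A (ModuleCat.of A (LinearMap.ker (indResCounit φ X))) :=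
      inferInstanceAs (Module.Finite A (LinearMap.ker (indResCounit φ X)))
    obtain ⟨k, hk⟩ := hX
    have hK' : PdLE A (f + k) (LinearMap.ker (indResCounit φ X)) :=
      PdLE.left (Submodule.injective_subtype _) (indResCounit_surjective φ X)
        (LinearMap.exact_subtype_ker _) (hT.mono (by lia)) (hk.mono (by lia))
    have := ih (X := ModuleCat.of A (LinearMap.ker (indResCounit φ X))) hK ⟨_, hK'⟩
      (hasRelLifting_indRes φ X) i' p' hpi'
    exact PdLE.right (Submodule.injective_subtype _) (indResCounit_surjective φ X)
        (LinearMap.exact_subtype_ker _) this (hT.mono (by lia))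

end RelativeProjective

variable {R : Type u} [CommRing R] [IsArtinianRing R]
  {B A : Type u} [Ring B] [Ring A] [Algebra R B] [Algebra R A]
  [Module.Finite R B] [Module.Finite R A]

/-- If `2 ≤ fd(φ) < ∞`, `A` has finite projective dimension as a left
`B`-module, `A` is projective as a right `B`-module, and `B` is representation-finite, then
the finitistic dimension of `A` is finite. -/
theorem statement7 (φ : B →ₐ[R] A)
    (hfd_lt_top : ∃ n : ℕ, ∀ X : ModuleCat.{u} A, Module.Finite A X →
      (∃ k : ℕ, ProjDimLE A k X) → RelProjDimLE φ n X)
    (hfd_ge_two : ∃ X : ModuleCat.{u} A, Module.Finite A X ∧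
      (∃ k : ℕ, ProjDimLE A k X) ∧ ¬ RelProjDimLE φ 1 X)
    (hpdBA : ∃ k : ℕ, ProjDimLE B k (resMod φ (ModuleCat.of A A)))
    (hprojright : @Module.Projective Bᵐᵒᵖ _ A _ (rightModB φ))
    (hB : RepFinite B) :
    FinFinDim A := by
  have : IsArtinianRing B := IsArtinianRing.of_finite R B
  have : IsNoetherianRing A := IsNoetherianRing.of_finite R A
  obtain ⟨n, hn⟩ := hfd_lt_top
  obtain ⟨d, hd⟩ := hpdBA
  obtain ⟨f, hf⟩ := hB.exists_pdLE
  obtain ⟨m, e, s, hs, he⟩ := exists_dualBasis φ hprojright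
  refine ⟨f + n, fun M hM ⟨k, hk⟩ => PdLE.projDimLE ?_⟩
  refine RelProjDimLE.pdLE (Q := PUnit.{u + 1}) (i := LinearMap.inl A M PUnit.{u + 1})
    (p := LinearMap.fst A M PUnit.{u + 1}) (fun X hX => ?_) (fun X hX ⟨l, hl⟩ => ?_) (hn M hM ⟨k, hk⟩)
    ⟨k, hk.pdLE⟩ (fun P Y g _ _ h => ⟨0, LinearMap.ext fun x => by
      rw [Subsingleton.elim x 0, map_zero, map_zero]⟩) rfl
  · have := finite_resMod φ X
    exact inferInstanceAs (Module.Finite A (Induced φ.toRingHom (resMod φ X)))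
  · have := finite_resMod φ X
    exact Induced.pdLE hs he (PdLE.projDimLE (hf _ ⟨_, hl.projDimLE.pdLE_resMod φ hd.pdLE⟩))
end

section
/- Let φ : B → A be a homomorphism of Artin algebras preserving identities such that 2 ≤ fd(φ) = n < ∞, where fd(φ) is the relative finitistic dimension of φ. Suppose that A has finite projective dimension as a left B-module, that A is projective as a right B-module, and that the finitistic dimension of B is finite, say fin.dim(B) = m. Then the finitistic dimension of A is finite; moreover fin.dim(A) ≤ m + n. -/
universe u

open TensorProduct

open CategoryTheory

section ProjectiveDimension

variable {Λ : Type u} [Ring Λ]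

theorem shortExact_of_linearMap_s8 {K P M : ModuleCat.{u} Λ} (f : K →ₗ[Λ] P) (g : P →ₗ[Λ] M)
    (hf : Function.Injective f) (hfg : Function.Exact f g) (hg : Function.Surjective g) :
    (ShortComplex.mk (ModuleCat.ofHom f) (ModuleCat.ofHom g)
      (by ext x; exact hfg.apply_apply_eq_zero x)).ShortExact where
  exact := (ShortComplex.ShortExact.moduleCat_exact_iff_function_exact _).2 hfg
  mono_f := (ModuleCat.mono_iff_injective _).2 hf
  epi_g := (ModuleCat.epi_iff_surjective _).2 hg

theorem shortExact_ker {P M : ModuleCat.{u} Λ} (g : P →ₗ[Λ] M) (hg : Function.Surjective g) :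
    (ShortComplex.mk (X₁ := ModuleCat.of Λ (LinearMap.ker g))
      (ModuleCat.ofHom (LinearMap.ker g).subtype) (ModuleCat.ofHom g)
      (by ext x; exact x.2)).ShortExact :=
  shortExact_of_linearMap_s8 (K := ModuleCat.of Λ (LinearMap.ker g)) (LinearMap.ker g).subtype g
    Subtype.val_injective (LinearMap.exact_subtype_ker_map g) hg

theorem hasProjectiveDimensionLE_of_retract {X Y : ModuleCat.{u} Λ} (i : X →ₗ[Λ] Y)
    (p : Y →ₗ[Λ] X) (h : p ∘ₗ i = LinearMap.id) (n : ℕ) [HasProjectiveDimensionLE Y n] :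
    HasProjectiveDimensionLE X n :=
  Retract.hasProjectiveDimensionLT
    { i := ModuleCat.ofHom i, r := ModuleCat.ofHom p, retract := by ext x; exact congr($h x) } _

theorem hasProjectiveDimensionLE_zero_iff (X : ModuleCat.{u} Λ) :
    HasProjectiveDimensionLE X 0 ↔ Module.Projective Λ X := by
  rw [← projective_iff_hasProjectiveDimensionLE_zero, ← IsProjective.iff_projective]

theorem ProjDimLE.hasProjectiveDimensionLE {n : ℕ} {X : ModuleCat.{u} Λ}
    (h : ProjDimLE Λ n X) : HasProjectiveDimensionLE X n := by
  induction n generalizing X with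
  | zero => exact (hasProjectiveDimensionLE_zero_iff X).2 h
  | succ n ih =>
    obtain ⟨P, g, hP, -, hg, hK⟩ := h
    have := (IsProjective.iff_projective P).1 hP
    exact (shortExact_ker g hg).hasProjectiveDimensionLT_X₃ (n + 1) (ih hK)
      (inferInstanceAs (HasProjectiveDimensionLT P (n + 1 + 1)))

theorem ProjDimLE.of_hasProjectiveDimensionLE [IsNoetherianRing Λ] {n : ℕ} {X : ModuleCat.{u} Λ}
    [Module.Finite Λ X] (h : HasProjectiveDimensionLE X n) : ProjDimLE Λ n X := by
  induction n generalizing X with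
  | zero => exact (hasProjectiveDimensionLE_zero_iff X).1 h
  | succ n ih =>
    obtain ⟨k, g, hg⟩ := Module.Finite.exists_fin' Λ X
    have hP : Module.Projective Λ (ModuleCat.of Λ (Fin k → Λ)) :=
      inferInstanceAs (Module.Projective Λ (Fin k → Λ))
    have hfin : Module.Finite Λ (ModuleCat.of Λ (Fin k → Λ)) :=
      inferInstanceAs (Module.Finite Λ (Fin k → Λ))
    have hPc := (IsProjective.iff_projective _).1 hP
    refine ⟨ModuleCat.of Λ (Fin k → Λ), g, hP, hfin, hg, ih ?_⟩
    exact (shortExact_ker (P := ModuleCat.of Λ (Fin k → Λ)) g hg).hasProjectiveDimensionLT_X₁ (n + 1)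
      (inferInstanceAs (HasProjectiveDimensionLT (ModuleCat.of Λ (Fin k → Λ)) (n + 1))) h

end ProjectiveDimension

section Restriction

variable {R : Type u} [CommRing R] {B A : Type u} [Ring B] [Ring A]
  [Algebra R B] [Algebra R A] (φ : B →ₐ[R] A)

/-- Restriction of an `A`-linear map to a `B`-linear map along `φ`. -/
def resHom {X Y : ModuleCat.{u} A} (f : X →ₗ[A] Y) : resMod φ X →ₗ[B] resMod φ Y where
  toFun := f
  map_add' := f.map_add
  map_smul' b x := f.map_smul (φ b) x

theorem resMod_pi_hasProjectiveDimensionLE {d : ℕ}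
    (hd : HasProjectiveDimensionLE (resMod φ (ModuleCat.of A A)) d) (k : ℕ) :
    HasProjectiveDimensionLE (resMod φ (ModuleCat.of A (Fin k → A))) d := by
  induction k with
  | zero =>
    have : Subsingleton (resMod φ (ModuleCat.of A (Fin 0 → A))) :=
      inferInstanceAs (Subsingleton (Fin 0 → A))
    have := (ModuleCat.isZero_of_subsingleton
      (resMod φ (ModuleCat.of A (Fin 0 → A)))).hasProjectiveDimensionLT_zero
    exact hasProjectiveDimensionLT_of_ge _ 0 _ (Nat.zero_le _)
  | succ k ih =>
    let f : A →ₗ[A] (Fin (k + 1) → A) := LinearMap.single A (fun _ => A) 0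
    let g : (Fin (k + 1) → A) →ₗ[A] (Fin k → A) := LinearMap.funLeft A A Fin.succ
    refine (shortExact_of_linearMap_s8
      (resHom φ (X := ModuleCat.of A A) (Y := ModuleCat.of A (Fin (k + 1) → A)) f)
      (resHom φ (X := ModuleCat.of A (Fin (k + 1) → A)) (Y := ModuleCat.of A (Fin k → A)) g)
      (Pi.single_injective (M := fun _ : Fin (k + 1) => A) 0) ?_ ?_).hasProjectiveDimensionLT_X₂
      (d + 1) hd ih
    · change Function.Exact f g
      intro x
      refine ⟨fun h => ⟨x 0, ?_⟩, ?_⟩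
      · ext j
        refine Fin.cases (by simp [f]) (fun j => ?_) j
        simpa [f, g, LinearMap.funLeft] using (congr_fun h j).symm
      · rintro ⟨a, rfl⟩
        ext j
        simp [f, g, LinearMap.funLeft]
    · exact LinearMap.funLeft_surjective_of_injective A A _ (Fin.succ_injective k)

/-- If `A` has projective dimension `≤ d` over `B`, restriction along `φ` raises projective
dimensions by at most `d`. -/
theorem ProjDimLE.resMod_hasProjectiveDimensionLE [IsNoetherianRing A] {d : ℕ}
    (hd : HasProjectiveDimensionLE (resMod φ (ModuleCat.of A A)) d) {k : ℕ}
    {X : ModuleCat.{u} A} [Module.Finite A X] (h : ProjDimLE A k X) :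
    HasProjectiveDimensionLE (resMod φ X) (d + k) := by
  have projective_case (P : ModuleCat.{u} A) (_ : Module.Finite A P)
      (_ : Module.Projective A P) : HasProjectiveDimensionLE (resMod φ P) d := by
    obtain ⟨n, f, g, -, -, hfg⟩ := Module.Finite.exists_comp_eq_id_of_projective A P
    have := resMod_pi_hasProjectiveDimensionLE φ hd n
    exact hasProjectiveDimensionLE_of_retract (resHom φ (Y := ModuleCat.of A (Fin n → A)) g)
      (resHom φ (X := ModuleCat.of A (Fin n → A)) f)
      (LinearMap.ext fun x => congr($hfg x)) d
  induction k generalizing X with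
  | zero => exact projective_case X ‹_› h
  | succ k ih =>
    obtain ⟨P, g, hP, hfin, hg, hK⟩ := h
    have hPd := projective_case P hfin hP
    have hfinK : Module.Finite A (ModuleCat.of A (LinearMap.ker g)) :=
      inferInstanceAs (Module.Finite A (LinearMap.ker g))
    exact (shortExact_of_linearMap_s8
      (resHom φ (X := ModuleCat.of A (LinearMap.ker g)) (LinearMap.ker g).subtype) (resHom φ g)
      Subtype.val_injective (LinearMap.exact_subtype_ker_map g) hg).hasProjectiveDimensionLT_X₃
      (d + k + 1) (ih hK) (hasProjectiveDimensionLT_of_ge _ (d + 1) _ (by lia))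

end Restriction

section InducedModule

variable {R : Type u} [CommRing R] {B A : Type u} [Ring B] [Ring A]
  [Algebra R B] [Algebra R A] (φ : B →ₐ[R] A)

section

variable (Y : Type u) [AddCommGroup Y] [Module B Y] [Module R Y]

/-- The relations `(a * φ b) ⊗ y = a ⊗ (b • y)` cutting `A ⊗_B Y` out of `A ⊗_R Y`. -/
def indRel : Submodule A (A ⊗[R] Y) :=
  Submodule.span A {z : A ⊗[R] Y | ∃ (a : A) (b : B) (y : Y),
    z = (a * φ b) ⊗ₜ[R] y - a ⊗ₜ[R] (b • y)}

/-- The induced module `A ⊗_B Y`, as a quotient of `A ⊗_R Y`. -/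
abbrev IndModule : Type u := (A ⊗[R] Y) ⧸ indRel φ Y

end

variable {Y : Type u} [AddCommGroup Y] [Module B Y] [Module R Y]

/-- The class of the pure tensor `a ⊗ y` in `A ⊗_B Y`. -/
def indMk (a : A) (y : Y) : IndModule φ Y := (indRel φ Y).mkQ (a ⊗ₜ[R] y)

theorem indMk_add (a : A) (y y' : Y) : indMk φ a (y + y') = indMk φ a y + indMk φ a y' := by
  simp [indMk, TensorProduct.tmul_add]

theorem smul_indMk (a a' : A) (y : Y) : a • indMk φ a' y = indMk φ (a * a') y := rfl

theorem indMk_mul (a : A) (b : B) (y : Y) : indMk φ (a * φ b) y = indMk φ a (b • y) :=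
  (Submodule.Quotient.eq _).2 (Submodule.subset_span ⟨a, b, y, rfl⟩)

theorem ind_addHom_ext {M : Type*} [AddCommGroup M] {f g : IndModule φ Y →+ M}
    (h : ∀ a y, f (indMk φ a y) = g (indMk φ a y)) : f = g := by
  ext z
  obtain ⟨z, rfl⟩ := (indRel φ Y).mkQ_surjective z
  induction z with
  | zero => simp
  | tmul a y => exact h a y
  | add z z' hz hz' => simp only [map_add, hz, hz']

theorem ind_linearMap_ext {M : Type*} [AddCommGroup M] [Module A M] {f g : IndModule φ Y →ₗ[A] M}
    (h : ∀ y, f (indMk φ 1 y) = g (indMk φ 1 y)) : f = g := by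
  refine LinearMap.toAddMonoidHom_injective (ind_addHom_ext φ fun a y => ?_)
  have : indMk φ a y = a • indMk φ 1 y := by rw [smul_indMk, mul_one]
  simp [this, h]

/-- The unit `y ↦ 1 ⊗ y` of the adjunction between induction and restriction. -/
def indUnit : Y →+ IndModule φ Y where
  toFun := indMk φ 1
  map_zero' := by simp [indMk]
  map_add' := indMk_add φ 1

theorem indUnit_smul (b : B) (y : Y) : indUnit φ (b • y) = φ b • indUnit φ y := by
  change indMk φ 1 (b • y) = φ b • indMk φ 1 y
  rw [smul_indMk, mul_one, ← indMk_mul, one_mul]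

variable [IsScalarTower R B Y]

/-- A biadditive `B`-balanced map out of `A × Y` induces an additive map out of `A ⊗_B Y`. -/
def indLiftAdd {M : Type*} [AddCommGroup M] (f : A →+ Y →+ M)
    (hf : ∀ a b y, f (a * φ b) y = f a (b • y)) : IndModule φ Y →+ M :=
  QuotientAddGroup.lift (indRel φ Y).toAddSubgroup
    (TensorProduct.liftAddHom f fun r a y => by
      rw [Algebra.smul_def, Algebra.commutes, ← φ.commutes, hf, algebraMap_smul])
    (by
      intro z hz
      have key := Submodule.span_induction
        (p := fun z _ => ∀ c : A, TensorProduct.liftAddHom f (fun r a y => by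
          rw [Algebra.smul_def, Algebra.commutes, ← φ.commutes, hf, algebraMap_smul]) (c • z) = 0)
        (by
          rintro _ ⟨a, b, y, rfl⟩ c
          rw [smul_sub, map_sub, sub_eq_zero]
          simp only [TensorProduct.smul_tmul', smul_eq_mul, TensorProduct.liftAddHom_tmul]
          rw [← mul_assoc, hf])
        (fun c => by rw [smul_zero, map_zero])
        (fun x y _ _ hx hy c => by rw [smul_add, map_add, hx, hy, add_zero])
        (fun d x _ hx c => by rw [← mul_smul, hx]) hz 1
      rwa [one_smul] at key)

/-- A `B`-linear map from `Y` to an `A`-module `M` extends to an `A`-linear map on `A ⊗_B Y`. -/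
def indLift {M : Type*} [AddCommGroup M] [Module A M] (g : Y →+ M)
    (hg : ∀ (b : B) y, g (b • y) = φ b • g y) : IndModule φ Y →ₗ[A] M :=
  let F : IndModule φ Y →+ M :=
    indLiftAdd φ ((AddMonoidHom.compHom.flip g).comp (Module.toAddMonoidEnd A M).toAddMonoidHom)
      fun a b y => by
        change (a * φ b) • g y = a • g (b • y)
        rw [hg, mul_smul]
  { F with
    map_smul' := fun c z => DFunLike.congr_fun (ind_addHom_ext φ
      (f := F.comp (DistribSMul.toAddMonoidHom (IndModule φ Y) c))
      (g := (DistribSMul.toAddMonoidHom M c).comp F) fun a y => mul_smul c a (g y)) z }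

variable {Z : Type u} [AddCommGroup Z] [Module B Z] [Module R Z]

/-- Functoriality of `A ⊗_B -`. -/
def indMap (f : Y →ₗ[B] Z) : IndModule φ Y →ₗ[A] IndModule φ Z :=
  indLift φ ((indUnit φ).comp f.toAddMonoidHom) fun b y => by
    simp [indUnit_smul]

@[simp]
theorem indMap_indMk (f : Y →ₗ[B] Z) (a : A) (y : Y) :
    indMap φ f (indMk φ a y) = indMk φ a (f y) := by
  change a • indMk φ 1 (f y) = _
  rw [smul_indMk, mul_one]

section DualBasis

variable {k : ℕ} (a : Fin k → A)

/-- The map `y ↦ ∑ a j ⊗ y j`. -/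
def indSum : (Fin k → Y) →+ IndModule φ Y where
  toFun y := ∑ j, indMk φ (a j) (y j)
  map_zero' := by simp [indMk]
  map_add' y y' := by simp [indMk_add, Finset.sum_add_distrib]

theorem indMap_indSum (g : Y →ₗ[B] Z) (y : Fin k → Y) :
    indMap φ g (indSum φ a y) = indSum φ a (fun j => g (y j)) := by
  simp [indSum]

variable [IsScalarTower R B Z] (f : Fin k → A →+ B)

/-- The coordinates on `A ⊗_B Y` given by right `B`-linear functionals on `A`. -/
def indCoord (hf : ∀ j x b, f j (x * φ b) = f j x * b) : IndModule φ Y →+ (Fin k → Y) :=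
  indLiftAdd φ
    (AddMonoidHom.mk' (fun x => AddMonoidHom.mk' (fun y j => f j x • y) fun y y' => by
      ext j; exact smul_add _ _ _) fun x x' => by
        ext y j; simp [add_smul])
    fun x b y => by ext j; simp [hf, mul_smul]

theorem indSum_indCoord (hf : ∀ j x b, f j (x * φ b) = f j x * b)
    (ha : ∀ x, ∑ j, a j * φ (f j x) = x) (z : IndModule φ Y) :
    indSum φ a (indCoord φ f hf z) = z := by
  refine DFunLike.congr_fun (ind_addHom_ext φ (f := (indSum φ a).comp (indCoord φ f hf))
    (g := AddMonoidHom.id _) fun x y => ?_) z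
  change ∑ j, indMk φ (a j) (f j x • y) = indMk φ x y
  simp_rw [← indMk_mul]
  conv_rhs => rw [← ha x]
  simp [indMk, TensorProduct.sum_tmul]

theorem indCoord_indMap (hf : ∀ j x b, f j (x * φ b) = f j x * b)
    (g : Y →ₗ[B] Z) (z : IndModule φ Y) :
    indCoord φ f hf (indMap φ g z) = fun j => g (indCoord φ f hf z j) := by
  refine DFunLike.congr_fun (ind_addHom_ext φ
    (f := (indCoord φ f hf).comp (indMap φ g).toAddMonoidHom)
    (g := (g.toAddMonoidHom.compLeft (Fin k)).comp (indCoord φ f hf)) fun x y => ?_) z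
  ext j
  change indCoord φ f hf (indMap φ g (indMk φ x y)) j = g (f j x • y)
  rw [indMap_indMk, map_smul]
  rfl

theorem indMap_injective (hf : ∀ j x b, f j (x * φ b) = f j x * b)
    (ha : ∀ x, ∑ j, a j * φ (f j x) = x)
    {g : Y →ₗ[B] Z} (hg : Function.Injective g) :
    Function.Injective (indMap φ g) := by
  refine (injective_iff_map_eq_zero _).2 fun z hz => ?_
  have h := indCoord_indMap φ f hf g z
  rw [hz, map_zero] at h
  have h0 : indCoord φ f hf z = 0 := by
    ext j
    exact hg (by simpa using (congr_fun h j).symm)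
  rw [← indSum_indCoord φ a f hf ha z, h0, map_zero]

theorem indMap_surjective (hf : ∀ j x b, f j (x * φ b) = f j x * b)
    (ha : ∀ x, ∑ j, a j * φ (f j x) = x)
    {g : Y →ₗ[B] Z} (hg : Function.Surjective g) :
    Function.Surjective (indMap φ g) := by
  intro z
  choose s hs using hg
  refine ⟨indSum φ a fun j => s (indCoord φ f hf z j), ?_⟩
  rw [indMap_indSum]
  simp_rw [hs]
  exact indSum_indCoord φ a f hf ha z

theorem indMap_exact (hf : ∀ j x b, f j (x * φ b) = f j x * b)
    (ha : ∀ x, ∑ j, a j * φ (f j x) = x)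
    {W : Type u} [AddCommGroup W] [Module B W] [Module R W] [IsScalarTower R B W]
    {i : W →ₗ[B] Y} {g : Y →ₗ[B] Z} (h : Function.Exact i g) :
    Function.Exact (indMap φ i) (indMap φ g) := by
  intro z
  constructor
  · intro hz
    have hc := indCoord_indMap φ f hf g z
    rw [hz, map_zero] at hc
    have (j : Fin k) : ∃ w, i w = indCoord φ f hf z j := (h _).1 (congr_fun hc j).symm
    choose w hw using this
    refine ⟨indSum φ a w, ?_⟩
    rw [indMap_indSum]
    simp_rw [hw]
    exact indSum_indCoord φ a f hf ha z
  · rintro ⟨w, rfl⟩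
    have : indMap φ g ∘ₗ indMap φ i = 0 :=
      ind_linearMap_ext φ fun y => by
        simp only [LinearMap.comp_apply, indMap_indMk, h.apply_apply_eq_zero]
        simp [indMk]
    exact congr($this w)

end DualBasis

theorem ind_projective [Module.Projective B Y] : Module.Projective A (IndModule φ Y) := by
  refine Module.Projective.of_lifting_property'' fun g hg => ?_
  let _ : Module B (IndModule φ Y →₀ A) := Module.compHom _ φ.toRingHom
  let _ : Module B (IndModule φ Y) := Module.compHom _ φ.toRingHom
  let gB : (IndModule φ Y →₀ A) →ₗ[B] IndModule φ Y :=
    { g.toAddMonoidHom with map_smul' := fun b x => g.map_smul (φ b) x }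
  let uB : Y →ₗ[B] IndModule φ Y := { indUnit φ with map_smul' := indUnit_smul φ }
  obtain ⟨h, hh⟩ := Module.projective_lifting_property gB uB hg
  refine ⟨indLift φ h.toAddMonoidHom fun b y => h.map_smul b y, ind_linearMap_ext φ fun y => ?_⟩
  change g ((1 : A) • h y) = indMk φ 1 y
  rw [one_smul]
  exact congr($hh y)

end InducedModule

section RelativeDimension

variable {R : Type u} [CommRing R] {B A : Type u} [Ring B] [Ring A]
  [Algebra R B] [Algebra R A] (φ : B →ₐ[R] A)

/-- Induction does not raise projective dimensions when `A` has a right dual basis over `B`. -/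
theorem ProjDimLE.indModule_hasProjectiveDimensionLE {k : ℕ} (a : Fin k → A) (f : Fin k → A →+ B)
    (hf : ∀ j x b, f j (x * φ b) = f j x * b) (ha : ∀ x, ∑ j, a j * φ (f j x) = x)
    {n : ℕ} {Y : ModuleCat.{u} B} [Module R Y] [IsScalarTower R B Y] (h : ProjDimLE B n Y) :
    HasProjectiveDimensionLE (ModuleCat.of A (IndModule φ Y)) n := by
  induction n generalizing Y with
  | zero =>
    have : Module.Projective B Y := h
    exact (hasProjectiveDimensionLE_zero_iff _).2 (ind_projective φ)
  | succ n ih =>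
    obtain ⟨P, g, hP, -, hg, hK⟩ := h
    let _ : Module R P := Module.compHom P (algebraMap R B)
    have : IsScalarTower R B P := IsScalarTower.of_algebraMap_smul fun _ _ => rfl
    have hTP := (hasProjectiveDimensionLE_zero_iff (ModuleCat.of A (IndModule φ P))).2
      (ind_projective φ)
    have hTK := ih (Y := ModuleCat.of B (LinearMap.ker g)) hK
    exact (shortExact_of_linearMap_s8
      (K := ModuleCat.of A (IndModule φ (LinearMap.ker g)))
      (P := ModuleCat.of A (IndModule φ P)) (M := ModuleCat.of A (IndModule φ Y))
      (indMap φ (LinearMap.ker g).subtype) (indMap φ g)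
      (indMap_injective φ a f hf ha Subtype.val_injective)
      (indMap_exact φ a f hf ha (LinearMap.exact_subtype_ker_map g))
      (indMap_surjective φ a f hf ha hg)).hasProjectiveDimensionLT_X₃ (n + 1) hTK
      (hasProjectiveDimensionLT_of_ge _ 1 _ (by lia))

theorem exists_right_dualBasis [Module.Finite R A]
    (h : @Module.Projective Bᵐᵒᵖ _ A _ (rightModB φ)) :
    ∃ (k : ℕ) (a : Fin k → A) (f : Fin k → A →+ B),
      (∀ j x b, f j (x * φ b) = f j x * b) ∧ ∀ x, ∑ j, a j * φ (f j x) = x := by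
  let _ : Module Bᵐᵒᵖ A := rightModB φ
  have hsmul (b : B) (x : A) : MulOpposite.op b • x = x * φ b := rfl
  have : IsScalarTower R Bᵐᵒᵖ A := IsScalarTower.of_algebraMap_smul fun r x => by
    rw [MulOpposite.algebraMap_apply, hsmul, φ.commutes, Algebra.smul_def, Algebra.commutes]
  have : Module.Finite Bᵐᵒᵖ A := Module.Finite.of_restrictScalars_finite R Bᵐᵒᵖ A
  obtain ⟨k, p, i, -, -, hpi⟩ := Module.Finite.exists_comp_eq_id_of_projective Bᵐᵒᵖ A
  refine ⟨k, fun j => p (Pi.single j 1), fun j => AddMonoidHom.mk' (fun x => (i x j).unop)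
    fun x y => by simp, fun j x b => ?_, fun x => ?_⟩
  · change (i (MulOpposite.op b • x) j).unop = (i x j).unop * b
    simp
  · have hx : p (i x) = x := congr($hpi x)
    conv_rhs => rw [← hx, pi_eq_sum_univ' (i x)]
    simp only [AddMonoidHom.mk'_apply, map_sum, ← hsmul, MulOpposite.op_unop]
    refine Finset.sum_congr rfl fun j _ => ?_
    rw [← map_smul]

theorem isScalarTower_compHom (X : Type u) [AddCommGroup X] [Module A X] :
    letI : Module R X := Module.compHom X (algebraMap R A)
    letI : Module B X := Module.compHom X φ.toRingHom
    IsScalarTower R B X :=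
  letI : Module R X := Module.compHom X (algebraMap R A)
  letI : Module B X := Module.compHom X φ.toRingHom
  IsScalarTower.of_algebraMap_smul fun r x => by
    change φ (algebraMap R B r) • x = algebraMap R A r • x
    rw [φ.commutes]

theorem relTensor_hasProjectiveDimensionLE [Module.Finite R A]
    (h : @Module.Projective Bᵐᵒᵖ _ A _ (rightModB φ)) {n : ℕ} {X : ModuleCat.{u} A}
    (hX : ProjDimLE B n (resMod φ X)) : HasProjectiveDimensionLE (relTensor φ X) n := by
  obtain ⟨k, a, f, hf, ha⟩ := exists_right_dualBasis φ h
  let _ : Module R (resMod φ X) := Module.compHom X (algebraMap R A)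
  have : IsScalarTower R B (resMod φ X) := isScalarTower_compHom φ X
  exact ProjDimLE.indModule_hasProjectiveDimensionLE φ a f hf ha hX

theorem relTensor_finite [Module.Finite R A] (X : ModuleCat.{u} A) [Module.Finite A X] :
    Module.Finite A (relTensor φ X) := by
  let _ : Module R X := Module.compHom X (algebraMap R A)
  have : IsScalarTower R A X := IsScalarTower.of_algebraMap_smul fun _ _ => rfl
  have : Module.Finite R X := Module.Finite.trans A X
  let _ : Module B X := Module.compHom X φ.toRingHom
  exact inferInstanceAs (Module.Finite A (IndModule φ X))

/-- A module has the lifting property for surjections that split over `B`. -/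
def RelLifts (P : Type u) [AddCommGroup P] [Module A P] : Prop :=
  ∀ ⦃M N : ModuleCat.{u} A⦄ (g : M →ₗ[A] N), Function.Surjective g → RelSplitB φ g →
    ∀ f : P →ₗ[A] N, ∃ l : P →ₗ[A] M, g ∘ₗ l = f

theorem RelLifts.of_retract {P Q : Type u} [AddCommGroup P] [Module A P] [AddCommGroup Q]
    [Module A Q] (hQ : RelLifts φ Q) (i : P →ₗ[A] Q) (p : Q →ₗ[A] P)
    (h : p ∘ₗ i = LinearMap.id) : RelLifts φ P := by
  intro M N g hg hs f
  obtain ⟨l, hl⟩ := hQ g hg hs (f ∘ₗ p)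
  exact ⟨l ∘ₗ i, by rw [← LinearMap.comp_assoc, hl, LinearMap.comp_assoc, h, LinearMap.comp_id]⟩

theorem RelLifts.prod {P Q : Type u} [AddCommGroup P] [Module A P] [AddCommGroup Q]
    [Module A Q] (hP : RelLifts φ P) (hQ : RelLifts φ Q) : RelLifts φ (P × Q) := by
  intro M N g hg hs f
  obtain ⟨l, hl⟩ := hP g hg hs (f ∘ₗ LinearMap.inl A P Q)
  obtain ⟨l', hl'⟩ := hQ g hg hs (f ∘ₗ LinearMap.inr A P Q)
  exact ⟨l.coprod l', by rw [LinearMap.comp_coprod, hl, hl', ← LinearMap.comp_coprod,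
    LinearMap.coprod_inl_inr, LinearMap.comp_id]⟩

theorem relLifts_relTensor (X : ModuleCat.{u} A) : RelLifts φ (relTensor φ X) := by
  let _ : Module R X := Module.compHom X (algebraMap R A)
  let _ : Module B X := Module.compHom X φ.toRingHom
  have : IsScalarTower R B X := isScalarTower_compHom φ X
  intro M N g hg ⟨h, hB, hs⟩ (f : IndModule φ X →ₗ[A] N)
  have hgh (y : N) : g (h y) = y := by
    obtain ⟨x, rfl⟩ := hg y
    exact hs x
  let s : X →+ M := h.comp (f.toAddMonoidHom.comp (indUnit φ))
  have hsB (b : B) (x : X) : s (b • x) = φ b • s x := by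
    change h (f (indUnit φ (b • x))) = φ b • h (f (indUnit φ x))
    rw [indUnit_smul, map_smul, hB]
  refine ⟨indLift φ s hsB, ind_linearMap_ext φ fun x => ?_⟩
  change g ((1 : A) • h (f (indMk φ 1 x))) = f (indMk φ 1 x)
  rw [one_smul, hgh]

theorem RelProjective.relLifts {X : ModuleCat.{u} A} (h : RelProjective φ X) : RelLifts φ X := by
  obtain ⟨i, p, hip⟩ := h
  exact (relLifts_relTensor φ X).of_retract φ i p hip

theorem exists_relCounit (X : ModuleCat.{u} A) :
    ∃ ε : relTensor φ X →ₗ[A] X, Function.Surjective ε ∧ RelSplitB φ ε := by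
  let _ : Module R X := Module.compHom X (algebraMap R A)
  let _ : Module B X := Module.compHom X φ.toRingHom
  have : IsScalarTower R B X := isScalarTower_compHom φ X
  let ε : IndModule φ X →ₗ[A] X := indLift φ (AddMonoidHom.id X) fun _ _ => rfl
  have hε (x : X) : ε (indUnit φ x) = x := one_smul A x
  exact ⟨ε, fun x => ⟨_, hε x⟩, indUnit φ, indUnit_smul φ, fun z => hε (ε z)⟩

/-- If `P → Z` and `T → X` split over `B`, `T` lifts along such maps, and `X` is a retract of
`Z × Q`, then the kernel of `T → X` is a retract of `ker (P → Z) × T`. -/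
theorem exists_retract_ker {X Z P T Q : ModuleCat.{u} A}
    (hP : RelLifts φ P) (hT : RelLifts φ T) (hQ : RelLifts φ Q)
    (g : P →ₗ[A] Z) (hg : Function.Surjective g) (hgs : RelSplitB φ g)
    (ε : T →ₗ[A] X) (hε : Function.Surjective ε) (hεs : RelSplitB φ ε)
    (i : X →ₗ[A] Z × Q) (p : Z × Q →ₗ[A] X) (hpi : p ∘ₗ i = LinearMap.id) :
    ∃ (i' : LinearMap.ker ε →ₗ[A] LinearMap.ker g × T)
      (p' : LinearMap.ker g × T →ₗ[A] LinearMap.ker ε), p' ∘ₗ i' = LinearMap.id := by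
  obtain ⟨α, hα⟩ := hT g hg hgs (LinearMap.fst A Z Q ∘ₗ i ∘ₗ ε)
  obtain ⟨β, hβ⟩ := hP.prod φ hQ ε hε hεs (p ∘ₗ g.prodMap LinearMap.id)
  let γ : T →ₗ[A] P × Q := α.prod (LinearMap.snd A Z Q ∘ₗ i ∘ₗ ε)
  have hβ' (x : P × Q) : ε (β x) = p (g x.1, x.2) := congr($hβ x)
  have hα' (t : T) : g (α t) = (i (ε t)).1 := congr($hα t)
  have hγ (t : T) : ε (β (γ t)) = ε t := by
    rw [hβ']
    change p (g (α t), (i (ε t)).2) = _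
    rw [hα']
    exact congr($hpi (ε t))
  let i₁ : LinearMap.ker ε →ₗ[A] LinearMap.ker g :=
    (α ∘ₗ (LinearMap.ker ε).subtype).codRestrict _ fun x => by
      simp [hα']
  let p₁ : LinearMap.ker g →ₗ[A] LinearMap.ker ε :=
    (β ∘ₗ LinearMap.inl A P Q ∘ₗ (LinearMap.ker g).subtype).codRestrict _ fun x => by
      simp [hβ', show p (0, 0) = 0 from map_zero p]
  let p₂ : T →ₗ[A] LinearMap.ker ε := (LinearMap.id - β ∘ₗ γ).codRestrict _ fun t => by
    simp [hγ]
  refine ⟨i₁.prod (LinearMap.ker ε).subtype, p₁.coprod p₂, ?_⟩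
  ext x
  have : γ (x : T) = (α x, 0) := Prod.ext rfl (by simp [γ])
  have hp₁ : (p₁ (i₁ x) : T) = β (α x, 0) := rfl
  have hp₂ : (p₂ x : T) = x - β (γ x) := rfl
  simp [hp₁, hp₂, this]

/-- If all modules `A ⊗_B X` with `X` of finite projective dimension have projective dimension
`≤ m`, then a module of finite projective dimension has projective dimension `≤ m + n` as soon as
it is, up to a relatively projective summand, a retract of one of relative dimension `≤ n`. -/
theorem hasProjectiveDimensionLE_of_retract_relProjDimLE [IsNoetherianRing A] [Module.Finite R A]
    {m : ℕ}
    (hT : ∀ X : ModuleCat.{u} A, Module.Finite A X → (∃ k, HasProjectiveDimensionLE X k) →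
      HasProjectiveDimensionLE (relTensor φ X) m)
    {n : ℕ} {X Z Q : ModuleCat.{u} A} [Module.Finite A X]
    (hX : ∃ k, HasProjectiveDimensionLE X k) (hQ : RelLifts φ Q) (hZ : RelProjDimLE φ n Z)
    (i : X →ₗ[A] Z × Q) (p : Z × Q →ₗ[A] X) (hpi : p ∘ₗ i = LinearMap.id) :
    HasProjectiveDimensionLE X (m + n) := by
  have hTX := hT X ‹_› hX
  obtain ⟨ε, hε, hεs⟩ := exists_relCounit φ X
  induction n generalizing X Z Q with
  | zero =>
    obtain ⟨s, hs⟩ := ((hZ.relLifts φ).prod φ hQ).of_retract φ i p hpi ε hε hεs LinearMap.id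
    exact hasProjectiveDimensionLE_of_retract s ε hs m
  | succ n ih =>
    obtain ⟨P, g, hP, -, hg, hgs, hK⟩ := hZ
    obtain ⟨i', p', h'⟩ := exists_retract_ker φ (hP.relLifts φ) (relLifts_relTensor φ X) hQ
      g hg hgs ε hε hεs i p hpi
    have := relTensor_finite φ X
    have hfin : Module.Finite A (ModuleCat.of A (LinearMap.ker ε)) :=
      inferInstanceAs (Module.Finite A (LinearMap.ker ε))
    have hker : ∃ k, HasProjectiveDimensionLE (ModuleCat.of A (LinearMap.ker ε)) k := by
      obtain ⟨k, hk⟩ := hX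
      exact ⟨m + k, (shortExact_ker ε hε).hasProjectiveDimensionLT_X₁ (m + k + 1)
        (hasProjectiveDimensionLT_of_ge _ (m + 1) _ (by lia))
        (hasProjectiveDimensionLT_of_ge _ (k + 1) _ (by lia))⟩
    obtain ⟨ε', hε', hεs'⟩ := exists_relCounit φ (ModuleCat.of A (LinearMap.ker ε))
    exact (shortExact_ker ε hε).hasProjectiveDimensionLT_X₃ (m + n + 1)
      (ih hker (relLifts_relTensor φ X) hK i' p' h' (hT _ hfin hker) ε' hε' hεs')
      (hasProjectiveDimensionLT_of_ge _ (m + 1) _ (by lia))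

end RelativeDimension

variable {R : Type u} [CommRing R] [IsArtinianRing R]
  {B A : Type u} [Ring B] [Ring A] [Algebra R B] [Algebra R A]
  [Module.Finite R B] [Module.Finite R A]

/-- If `2 ≤ fd(φ) = n < ∞`, `A` has finite projective dimension as a left
`B`-module, `A` is projective as a right `B`-module, and `fin.dim B = m < ∞`, then
`fin.dim A` is finite and `fin.dim A ≤ m + n`. -/
theorem statement8 (φ : B →ₐ[R] A) (n m : ℕ) (hn : 2 ≤ n)
    (hfd_ub : ∀ X : ModuleCat.{u} A, Module.Finite A X →
      (∃ k : ℕ, ProjDimLE A k X) → RelProjDimLE φ n X)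
    (hfd_lub : ∀ k : ℕ, (∀ X : ModuleCat.{u} A, Module.Finite A X →
      (∃ l : ℕ, ProjDimLE A l X) → RelProjDimLE φ k X) → n ≤ k)
    (hpdBA : ∃ k : ℕ, ProjDimLE B k (resMod φ (ModuleCat.of A A)))
    (hprojright : @Module.Projective Bᵐᵒᵖ _ A _ (rightModB φ))
    (hfinB_ub : ∀ Y : ModuleCat.{u} B, Module.Finite B Y →
      (∃ k : ℕ, ProjDimLE B k Y) → ProjDimLE B m Y)
    (hfinB_lub : ∀ k : ℕ, (∀ Y : ModuleCat.{u} B, Module.Finite B Y →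
      (∃ l : ℕ, ProjDimLE B l Y) → ProjDimLE B k Y) → m ≤ k) :
    FinFinDim A ∧ ∀ X : ModuleCat.{u} A, Module.Finite A X →
      (∃ k : ℕ, ProjDimLE A k X) → ProjDimLE A (m + n) X := by
  have : IsNoetherian R A := isNoetherian_of_isNoetherianRing_of_finite R A
  have : IsNoetherianRing A := isNoetherian_of_tower R this
  have : IsNoetherian R B := isNoetherian_of_isNoetherianRing_of_finite R B
  have : IsNoetherianRing B := isNoetherian_of_tower R this
  have hfinB (X : ModuleCat.{u} A) (_ : Module.Finite A X) : Module.Finite B (resMod φ X) := by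
    let _ : Module R (resMod φ X) := Module.compHom X (algebraMap R A)
    let _ : Module A (resMod φ X) := inferInstanceAs (Module A X)
    have : Module.Finite A (resMod φ X) := ‹_›
    have : IsScalarTower R A (resMod φ X) := IsScalarTower.of_algebraMap_smul fun _ _ => rfl
    have : IsScalarTower R B (resMod φ X) := isScalarTower_compHom φ X
    have : Module.Finite R (resMod φ X) := Module.Finite.trans A _
    exact Module.Finite.of_restrictScalars_finite R B _
  obtain ⟨d, hd⟩ := hpdBA
  have hT (X : ModuleCat.{u} A) (hX : Module.Finite A X)
      (hk : ∃ k, HasProjectiveDimensionLE X k) :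
      HasProjectiveDimensionLE (relTensor φ X) m := by
    obtain ⟨k, hk⟩ := hk
    have := hfinB X hX
    exact relTensor_hasProjectiveDimensionLE φ hprojright (hfinB_ub _ this
      ⟨d + k, .of_hasProjectiveDimensionLE ((ProjDimLE.of_hasProjectiveDimensionLE
        hk).resMod_hasProjectiveDimensionLE φ hd.hasProjectiveDimensionLE)⟩)
  have main (X : ModuleCat.{u} A) (hX : Module.Finite A X) (hk : ∃ k : ℕ, ProjDimLE A k X) :
      ProjDimLE A (m + n) X :=
    .of_hasProjectiveDimensionLE (hasProjectiveDimensionLE_of_retract_relProjDimLE φ hT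
      (hk.imp fun _ h => h.hasProjectiveDimensionLE) (relLifts_relTensor φ X) (hfd_ub X hX hk)
      (LinearMap.inl A _ _) (LinearMap.fst A _ _) (LinearMap.fst_comp_inl ..))
  exact ⟨⟨m + n, main⟩, main⟩
end

section
/- Let B = A₀ ⊆ A₁ ⊆ ⋯ ⊆ A_{s-1} ⊆ A_s = A be a chain of subalgebras (with the same identity) of an Artin algebra A, and for each 1 ≤ i ≤ s let I_{i-1} be a two-sided ideal of A_{i-1} that is also a left ideal of A_i, where s is a positive integer. If A is 1-syzygy-finite and B/(I_{s-1}⋯I₁I₀) is B-syzygy-finite (for example, representation-finite), then the finitistic dimension of B is finite. -/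
universe u

open TensorProduct

section ProjectiveDimension

open CategoryTheory

variable {B : Type u} [Ring B]

/-- The unbundled module `X` has projective dimension `< n`. -/
abbrev PdLT (B : Type u) [Ring B] (X : Type u) [AddCommGroup X] [Module B X] (n : ℕ) : Prop :=
  HasProjectiveDimensionLT (ModuleCat.of B X) n

/-- The unbundled module `X` has finite projective dimension. -/
def FinitePd (B : Type u) [Ring B] (X : Type u) [AddCommGroup X] [Module B X] : Prop :=
  ∃ n, PdLT B X n

/-- `X` is a direct summand of `Y`. -/
def IsSummand (B : Type u) [Ring B] (X Y : Type u) [AddCommGroup X] [Module B X]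
    [AddCommGroup Y] [Module B Y] : Prop :=
  ∃ (i : X →ₗ[B] Y) (p : Y →ₗ[B] X), p.comp i = LinearMap.id

/-- `0 → X → Y → Z → 0` is a short exact sequence. -/
structure IsShortExact {X Y Z : Type u} [AddCommGroup X] [Module B X] [AddCommGroup Y]
    [Module B Y] [AddCommGroup Z] [Module B Z] (f : X →ₗ[B] Y) (g : Y →ₗ[B] Z) : Prop where
  inj : Function.Injective f
  exact : Function.Exact f g
  surj : Function.Surjective g

variable {X Y Z : Type u} [AddCommGroup X] [Module B X] [AddCommGroup Y] [Module B Y]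
  [AddCommGroup Z] [Module B Z]

theorem PdLT.mono {m n : ℕ} (h : m ≤ n) (hX : PdLT B X m) : PdLT B X n :=
  hasProjectiveDimensionLT_of_ge _ m n h

theorem IsSummand.pdLT {n : ℕ} (h : IsSummand B X Y) (hY : PdLT B Y n) : PdLT B X n := by
  obtain ⟨i, p, hip⟩ := h
  let r : Retract (ModuleCat.of B X) (ModuleCat.of B Y) :=
    { i := ModuleCat.ofHom i
      r := ModuleCat.ofHom p
      retract := by rw [← ModuleCat.ofHom_comp, hip]; rfl }
  exact r.hasProjectiveDimensionLT n

theorem IsSummand.finitePd (h : IsSummand B X Y) (hY : FinitePd B Y) : FinitePd B X :=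
  hY.imp fun _ hn => h.pdLT hn

theorem IsSummand.of_equiv (e : X ≃ₗ[B] Y) : IsSummand B X Y :=
  ⟨e, e.symm, by ext; simp⟩

theorem IsSummand.trans (h : IsSummand B X Y) (h' : IsSummand B Y Z) : IsSummand B X Z := by
  obtain ⟨i, p, hip⟩ := h
  obtain ⟨j, q, hjq⟩ := h'
  refine ⟨j ∘ₗ i, p ∘ₗ q, ?_⟩
  rw [LinearMap.comp_assoc, ← LinearMap.comp_assoc i, hjq, LinearMap.id_comp, hip]

theorem IsSummand.fst : IsSummand B X (X × Y) :=
  ⟨LinearMap.inl B X Y, LinearMap.fst B X Y, LinearMap.fst_comp_inl ..⟩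

theorem IsSummand.snd : IsSummand B Y (X × Y) :=
  ⟨LinearMap.inr B X Y, LinearMap.snd B X Y, LinearMap.snd_comp_inr ..⟩

theorem IsSummand.finite (h : IsSummand B X Y) [Module.Finite B Y] : Module.Finite B X := by
  obtain ⟨i, p, hip⟩ := h
  exact Module.Finite.of_surjective p fun x => ⟨i x, LinearMap.congr_fun hip x⟩

theorem pdLT_congr {n : ℕ} (e : X ≃ₗ[B] Y) (hX : PdLT B X n) : PdLT B Y n :=
  (IsSummand.of_equiv e.symm).pdLT hX

theorem projective_iff_pdLT_one : Module.Projective B X ↔ PdLT B X 1 := by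
  rw [IsProjective.iff_projective, projective_iff_hasProjectiveDimensionLT_one]

theorem pdLT_of_projective [Module.Projective B X] {n : ℕ} (hn : 1 ≤ n) : PdLT B X n :=
  PdLT.mono hn (projective_iff_pdLT_one.1 inferInstance)

namespace IsShortExact

variable {f : X →ₗ[B] Y} {g : Y →ₗ[B] Z}

theorem shortExact (h : IsShortExact f g) :
    (ModuleCat.shortComplexOfCompEqZero f g h.exact.linearMap_comp_eq_zero).ShortExact :=
  ModuleCat.shortComplex_shortExact _ h.exact h.inj h.surj

theorem pdLT_left (h : IsShortExact f g) {n : ℕ} (hY : PdLT B Y n) (hZ : PdLT B Z (n + 1)) :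
    PdLT B X n :=
  h.shortExact.hasProjectiveDimensionLT_X₁ n hY hZ

theorem pdLT_mid (h : IsShortExact f g) {n : ℕ} (hX : PdLT B X n) (hZ : PdLT B Z n) :
    PdLT B Y n :=
  h.shortExact.hasProjectiveDimensionLT_X₂ n hX hZ

theorem pdLT_right (h : IsShortExact f g) {n : ℕ} (hX : PdLT B X n) (hY : PdLT B Y (n + 1)) :
    PdLT B Z (n + 1) :=
  h.shortExact.hasProjectiveDimensionLT_X₃ n hX hY

theorem exists_equiv_of_projective [Module.Projective B Z] (h : IsShortExact f g) :
    Nonempty (Y ≃ₗ[B] X × Z) := by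
  obtain ⟨l, hl⟩ := Module.projective_lifting_property g LinearMap.id h.surj
  exact ⟨(h.exact.splitSurjectiveEquiv h.inj ⟨l, hl⟩).1⟩

end IsShortExact

theorem isShortExact_ker (g : Y →ₗ[B] Z) (hg : Function.Surjective g) :
    IsShortExact (LinearMap.ker g).subtype g :=
  ⟨Subtype.val_injective, LinearMap.exact_subtype_ker_map g, hg⟩

theorem isShortExact_mkQ (N : Submodule B Y) : IsShortExact N.subtype N.mkQ :=
  ⟨Subtype.val_injective, LinearMap.exact_subtype_mkQ N, N.mkQ_surjective⟩

theorem IsShortExact.of_prod : IsShortExact (LinearMap.inl B X Y) (LinearMap.snd B X Y) :=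
  ⟨LinearMap.inl_injective, .inl_snd, LinearMap.snd_surjective⟩

theorem PdLT.prod {n : ℕ} (hX : PdLT B X n) (hY : PdLT B Y n) : PdLT B (X × Y) n :=
  IsShortExact.of_prod.pdLT_mid hX hY

theorem pdLT_of_projDimLE {n : ℕ} {M : ModuleCat.{u} B} (h : ProjDimLE B n M) :
    PdLT B M (n + 1) := by
  induction n generalizing M with
  | zero =>
    have : Module.Projective B M := h
    exact pdLT_of_projective le_rfl
  | succ n ih =>
    obtain ⟨P, g, hP, -, hg, hK⟩ := h
    exact (isShortExact_ker g hg).pdLT_right (ih hK) (pdLT_of_projective (by lia))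

theorem projDimLE_of_pdLT [IsNoetherianRing B] {n : ℕ} {M : ModuleCat.{u} B}
    [Module.Finite B M] (h : PdLT B M (n + 1)) : ProjDimLE B n M := by
  induction n generalizing M with
  | zero => exact projective_iff_pdLT_one.2 h
  | succ n ih =>
    obtain ⟨k, g, hg⟩ := Module.Finite.exists_fin' B M
    refine ⟨ModuleCat.of B (Fin k → B), g, ?_, ?_, hg, ?_⟩
    · change Module.Projective B (Fin k → B); infer_instance
    · change Module.Finite B (Fin k → B); infer_instance
    · have : Module.Finite B (ModuleCat.of B (LinearMap.ker g)) := by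
        change Module.Finite B (LinearMap.ker g); infer_instance
      exact ih ((isShortExact_ker g hg).pdLT_left (pdLT_of_projective (by lia)) h)

end ProjectiveDimension

section Additive

variable {B : Type u} [Ring B]

theorem inAdd_iff {N X : ModuleCat.{u} B} :
    InAdd B N X ↔ ∃ k : ℕ, IsSummand B X (Fin k → N) := Iff.rfl

theorem inAdd_of_fintype {N X : ModuleCat.{u} B} {ι : Type} [Fintype ι]
    (h : IsSummand B X (ι → N)) : InAdd B N X :=
  ⟨Fintype.card ι, h.trans (.of_equiv (LinearEquiv.funCongrLeft B N (Fintype.equivFin ι).symm))⟩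

theorem InAdd.of_isSummand {N X Y : ModuleCat.{u} B} (h : IsSummand B X Y) (hY : InAdd B N Y) :
    InAdd B N X := by
  obtain ⟨k, hk⟩ := inAdd_iff.1 hY
  exact ⟨k, h.trans hk⟩

theorem InAdd.refl (N : ModuleCat.{u} B) : InAdd B N N :=
  inAdd_of_fintype (ι := Unit) (.of_equiv (LinearEquiv.funUnique Unit B N).symm)

theorem IsSummand.prod {X Y X' Y' : Type u} [AddCommGroup X] [Module B X] [AddCommGroup Y]
    [Module B Y] [AddCommGroup X'] [Module B X'] [AddCommGroup Y'] [Module B Y']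
    (h : IsSummand B X Y) (h' : IsSummand B X' Y') : IsSummand B (X × X') (Y × Y') := by
  obtain ⟨i, p, hip⟩ := h
  obtain ⟨j, q, hjq⟩ := h'
  exact ⟨i.prodMap j, p.prodMap q, by rw [LinearMap.prodMap_comp, hip, hjq, LinearMap.prodMap_id]⟩

theorem IsSummand.pi {X Y : Type u} [AddCommGroup X] [Module B X] [AddCommGroup Y]
    [Module B Y] (h : IsSummand B X Y) (ι : Type) : IsSummand B (ι → X) (ι → Y) := by
  obtain ⟨i, p, hip⟩ := h
  refine ⟨i.compLeft ι, p.compLeft ι, ?_⟩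
  ext f a
  exact LinearMap.congr_fun hip (f a)

theorem InAdd.prod {N X Y : ModuleCat.{u} B} (hX : InAdd B N X) (hY : InAdd B N Y) :
    InAdd B N (ModuleCat.of B (X × Y)) := by
  obtain ⟨k, hk⟩ := inAdd_iff.1 hX
  obtain ⟨l, hl⟩ := inAdd_iff.1 hY
  exact inAdd_of_fintype (ι := Fin k ⊕ Fin l)
    ((hk.prod hl).trans (.of_equiv (LinearEquiv.sumArrowLequivProdArrow _ _ B N).symm))

theorem InAdd.pi {N X : ModuleCat.{u} B} (hX : InAdd B N X) (k : ℕ) :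
    InAdd B N (ModuleCat.of B (Fin k → X)) := by
  obtain ⟨l, hl⟩ := inAdd_iff.1 hX
  exact inAdd_of_fintype (ι := Fin k × Fin l)
    ((hl.pi (Fin k)).trans (.of_equiv (LinearEquiv.curry B N (Fin k) (Fin l)).symm))

theorem InAdd.trans {N N' X : ModuleCat.{u} B} (hX : InAdd B N X) (hN : InAdd B N' N) :
    InAdd B N' X := by
  obtain ⟨k, hk⟩ := inAdd_iff.1 hX
  exact InAdd.of_isSummand (Y := ModuleCat.of B (Fin k → N)) hk (hN.pi k)

theorem InAdd.left {N N' X : ModuleCat.{u} B} (hX : InAdd B N X) :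
    InAdd B (ModuleCat.of B (N × N')) X :=
  hX.trans (.of_isSummand .fst (.refl (ModuleCat.of B (N × N'))))

theorem InAdd.right {N N' X : ModuleCat.{u} B} (hX : InAdd B N' X) :
    InAdd B (ModuleCat.of B (N × N')) X :=
  hX.trans (.of_isSummand .snd (.refl (ModuleCat.of B (N × N'))))

theorem InAdd.finite {N X : ModuleCat.{u} B} [Module.Finite B N] (hX : InAdd B N X) :
    Module.Finite B X := by
  obtain ⟨k, hk⟩ := inAdd_iff.1 hX
  exact hk.finite

theorem inAdd_of_projective {Q : ModuleCat.{u} B} [Module.Finite B Q]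
    [Module.Projective B Q] : InAdd B (ModuleCat.of B B) Q := by
  obtain ⟨k, g, hg⟩ := Module.Finite.exists_fin' B Q
  obtain ⟨l, hl⟩ := Module.projective_lifting_property g LinearMap.id hg
  exact ⟨k, l, g, hl⟩

end Additive

section Syzygy

variable {B : Type u} [Ring B]

/-- `K` is the kernel of a surjection onto `X` from a finitely generated projective module. -/
def IsSyzygyOne (K X : ModuleCat.{u} B) : Prop :=
  ∃ (P : ModuleCat.{u} B) (i : K →ₗ[B] P) (g : P →ₗ[B] X),
    Module.Projective B P ∧ Module.Finite B P ∧ IsShortExact i g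

/-- `K` is an `n`-th syzygy of `X`, computed by a not necessarily minimal resolution by
finitely generated projective modules. -/
def IsSyzygy : ℕ → ModuleCat.{u} B → ModuleCat.{u} B → Prop
  | 0, K, X => Nonempty (K ≃ₗ[B] X)
  | n + 1, K, X => ∃ K' : ModuleCat.{u} B, IsSyzygy n K' X ∧ IsSyzygyOne K K'

variable {K L X Y Z : ModuleCat.{u} B}

theorem IsSyzygyOne.pi (h : IsSyzygyOne K X) (k : ℕ) :
    IsSyzygyOne (ModuleCat.of B (Fin k → K)) (ModuleCat.of B (Fin k → X)) := by
  obtain ⟨P, i, g, hP, hP', hs⟩ := h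
  refine ⟨ModuleCat.of B (Fin k → P), i.compLeft _, g.compLeft _,
    Module.Projective.of_equiv
      (DFinsupp.linearEquivFunOnFintype (R := B) (M := fun _ : Fin k => P)),
    inferInstanceAs (Module.Finite B (Fin k → P)), ⟨?_, ?_, ?_⟩⟩
  · intro x y hxy
    funext a
    exact hs.inj (congrFun hxy a)
  · intro y
    constructor
    · intro hy
      choose x hx using fun a => (hs.exact (y a)).1 (congrFun hy a)
      exact ⟨x, funext hx⟩
    · rintro ⟨x, rfl⟩
      funext a
      exact hs.exact.apply_apply_eq_zero (x a)
  · intro y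
    choose x hx using fun a => hs.surj (y a)
    exact ⟨x, funext hx⟩

theorem IsSyzygyOne.prod (h : IsSyzygyOne K X) (h' : IsSyzygyOne L Y) :
    IsSyzygyOne (ModuleCat.of B (K × L)) (ModuleCat.of B (X × Y)) := by
  obtain ⟨P, i, g, hP, hP', hs⟩ := h
  obtain ⟨Q, j, q, hQ, hQ', ht⟩ := h'
  refine ⟨ModuleCat.of B (P × Q), i.prodMap j, g.prodMap q,
    inferInstanceAs (Module.Projective B (P × Q)),
    inferInstanceAs (Module.Finite B (P × Q)), ⟨?_, ?_, ?_⟩⟩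
  · exact hs.inj.prodMap ht.inj
  · rintro ⟨x, y⟩
    simp only [LinearMap.prodMap_apply, Prod.mk_eq_zero, Set.mem_range, Prod.exists, Prod.mk.injEq]
    constructor
    · rintro ⟨hx, hy⟩
      obtain ⟨a, ha⟩ := (hs.exact x).1 hx
      obtain ⟨b, hb⟩ := (ht.exact y).1 hy
      exact ⟨a, b, ha, hb⟩
    · rintro ⟨a, b, rfl, rfl⟩
      exact ⟨hs.exact.apply_apply_eq_zero a, ht.exact.apply_apply_eq_zero b⟩
  · exact hs.surj.prodMap ht.surj

theorem IsShortExact.comp_equiv {X Y Z X' Z' : Type u} [AddCommGroup X] [Module B X]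
    [AddCommGroup Y] [Module B Y] [AddCommGroup Z] [Module B Z] [AddCommGroup X'] [Module B X']
    [AddCommGroup Z'] [Module B Z'] {f : X →ₗ[B] Y} {g : Y →ₗ[B] Z} (h : IsShortExact f g)
    (e : X' ≃ₗ[B] X) (e' : Z ≃ₗ[B] Z') :
    IsShortExact (f ∘ₗ e.toLinearMap) (e'.toLinearMap ∘ₗ g) := by
  refine ⟨h.inj.comp e.injective, fun y => ?_, e'.surjective.comp h.surj⟩
  simp only [LinearMap.comp_apply, LinearEquiv.coe_coe, LinearEquiv.map_eq_zero_iff, h.exact y,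
    Set.mem_range]
  exact e.surjective.exists

theorem IsSyzygyOne.congr (h : IsSyzygyOne K X) (e : L ≃ₗ[B] K) (e' : X ≃ₗ[B] Y) :
    IsSyzygyOne L Y := by
  obtain ⟨P, i, g, hP, hP', hs⟩ := h
  exact ⟨P, _, _, hP, hP', hs.comp_equiv e e'⟩

theorem IsSyzygyOne.finite [IsNoetherianRing B] (h : IsSyzygyOne K X) : Module.Finite B K := by
  obtain ⟨P, i, g, hP, hP', hs⟩ := h
  exact Module.Finite.of_injective i hs.inj

theorem exists_isSyzygyOne (X : ModuleCat.{u} B) [Module.Finite B X] :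
    ∃ K : ModuleCat.{u} B, IsSyzygyOne K X := by
  obtain ⟨k, g, hg⟩ := Module.Finite.exists_fin' B X
  exact ⟨ModuleCat.of B (LinearMap.ker g), ModuleCat.of B (Fin k → B), _, g,
    inferInstanceAs (Module.Projective B (Fin k → B)),
    inferInstanceAs (Module.Finite B (Fin k → B)), isShortExact_ker g hg⟩

theorem IsSyzygy.one_iff : IsSyzygy 1 K X ↔ IsSyzygyOne K X := by
  constructor
  · rintro ⟨K', ⟨e⟩, h⟩
    exact h.congr (.refl B K) e
  · exact fun h => ⟨X, ⟨.refl B X⟩, h⟩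

theorem IsSyzygy.congr {n : ℕ} (h : IsSyzygy n K X) (e : L ≃ₗ[B] K) (e' : X ≃ₗ[B] Y) :
    IsSyzygy n L Y := by
  induction n generalizing K L with
  | zero => exact h.map fun h => (e.trans h).trans e'
  | succ n ih =>
    obtain ⟨K', hK', h⟩ := h
    exact ⟨K', ih hK' (.refl B K'), h.congr e (.refl B K')⟩

theorem IsSyzygy.finite [IsNoetherianRing B] {n : ℕ} (h : IsSyzygy n K X) [Module.Finite B X] :
    Module.Finite B K := by
  cases n with
  | zero => exact Module.Finite.equiv h.some.symm
  | succ n =>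
    obtain ⟨K', -, h⟩ := h
    exact h.finite

theorem exists_isSyzygy [IsNoetherianRing B] (n : ℕ) (X : ModuleCat.{u} B) [Module.Finite B X] :
    ∃ K : ModuleCat.{u} B, IsSyzygy n K X := by
  induction n with
  | zero => exact ⟨X, ⟨.refl B X⟩⟩
  | succ n ih =>
    obtain ⟨K', hK'⟩ := ih
    have := hK'.finite
    obtain ⟨K, hK⟩ := exists_isSyzygyOne K'
    exact ⟨K, K', hK', hK⟩

theorem IsSyzygy.prod {n : ℕ} (h : IsSyzygy n K X) (h' : IsSyzygy n L Y) :
    IsSyzygy n (ModuleCat.of B (K × L)) (ModuleCat.of B (X × Y)) := by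
  induction n generalizing K L with
  | zero => exact ⟨h.some.prodCongr h'.some⟩
  | succ n ih =>
    obtain ⟨K', hK', h⟩ := h
    obtain ⟨L', hL', h'⟩ := h'
    exact ⟨_, ih hK' hL', h.prod h'⟩

theorem IsSyzygy.pi {n : ℕ} (h : IsSyzygy n K X) (k : ℕ) :
    IsSyzygy n (ModuleCat.of B (Fin k → K)) (ModuleCat.of B (Fin k → X)) := by
  induction n generalizing K with
  | zero => exact ⟨LinearEquiv.piCongrRight fun _ => h.some⟩
  | succ n ih =>
    obtain ⟨K', hK', h⟩ := h
    exact ⟨_, ih hK', h.pi k⟩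

/-- **Schanuel lemma**. -/
theorem exists_equiv_of_isShortExact {K P K' P' X : Type u} [AddCommGroup K] [Module B K]
    [AddCommGroup P] [Module B P] [AddCommGroup K'] [Module B K'] [AddCommGroup P'] [Module B P']
    [AddCommGroup X] [Module B X] {i : K →ₗ[B] P} {g : P →ₗ[B] X} {i' : K' →ₗ[B] P'}
    {g' : P' →ₗ[B] X} [Module.Projective B P] [Module.Projective B P']
    (h : IsShortExact i g) (h' : IsShortExact i' g') : Nonempty ((K × P') ≃ₗ[B] (K' × P)) := by
  let Q : Submodule B (P × P') :=
    LinearMap.ker (g ∘ₗ LinearMap.fst B P P' - g' ∘ₗ LinearMap.snd B P P')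
  have hQ (x : P × P') : x ∈ Q ↔ g x.1 = g' x.2 := by simp [Q, sub_eq_zero]
  let a : K →ₗ[B] Q := (LinearMap.inl B P P' ∘ₗ i).codRestrict Q fun k => by
    simp [hQ, h.exact.apply_apply_eq_zero]
  let b : K' →ₗ[B] Q := (LinearMap.inr B P P' ∘ₗ i').codRestrict Q fun k => by
    simp [hQ, h'.exact.apply_apply_eq_zero]
  have ha : IsShortExact a (LinearMap.snd B P P' ∘ₗ Q.subtype) := by
    refine ⟨fun x y hxy => h.inj (congrArg (fun q : Q => q.1.1) hxy), ?_, fun p => ?_⟩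
    · rintro ⟨⟨p, p'⟩, hp⟩
      rw [hQ] at hp
      constructor
      · intro h0
        have h0 : p' = 0 := h0
        subst h0
        obtain ⟨k, hk⟩ := (h.exact p).1 (by simpa using hp)
        exact ⟨k, Subtype.ext (Prod.ext hk rfl)⟩
      · rintro ⟨k, hk⟩
        exact (congrArg (fun q : Q => q.1.2) hk).symm
    · obtain ⟨q, hq⟩ := h.surj (g' p)
      exact ⟨⟨(q, p), (hQ _).2 hq⟩, rfl⟩
  have hb : IsShortExact b (LinearMap.fst B P P' ∘ₗ Q.subtype) := by
    refine ⟨fun x y hxy => h'.inj (congrArg (fun q : Q => q.1.2) hxy), ?_, fun p => ?_⟩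
    · rintro ⟨⟨p, p'⟩, hp⟩
      rw [hQ] at hp
      constructor
      · intro h0
        have h0 : p = 0 := h0
        subst h0
        obtain ⟨k, hk⟩ := (h'.exact p').1 (by simpa using hp.symm)
        exact ⟨k, Subtype.ext (Prod.ext rfl hk)⟩
      · rintro ⟨k, hk⟩
        exact (congrArg (fun q : Q => q.1.1) hk).symm
    · obtain ⟨q, hq⟩ := h'.surj (g p)
      exact ⟨⟨(p, q), (hQ _).2 hq.symm⟩, rfl⟩
  obtain ⟨e⟩ := ha.exists_equiv_of_projective
  obtain ⟨e'⟩ := hb.exists_equiv_of_projective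
  exact ⟨e.symm.trans e'⟩

theorem IsShortExact.prod_id {X Y Z : Type u} [AddCommGroup X] [Module B X]
    [AddCommGroup Y] [Module B Y] [AddCommGroup Z] [Module B Z] {f : X →ₗ[B] Y} {g : Y →ₗ[B] Z}
    (h : IsShortExact f g) (Q : Type u) [AddCommGroup Q] [Module B Q] :
    IsShortExact (LinearMap.inl B Y Q ∘ₗ f) (g.prodMap (LinearMap.id : Q →ₗ[B] Q)) := by
  refine ⟨LinearMap.inl_injective.comp h.inj, ?_, h.surj.prodMap Function.surjective_id⟩
  rintro ⟨y, q⟩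
  constructor
  · intro h0
    obtain ⟨h1, h2⟩ := Prod.ext_iff.1 h0
    obtain ⟨x, hx⟩ := (h.exact y).1 h1
    exact ⟨x, Prod.ext hx h2.symm⟩
  · rintro ⟨x, hx⟩
    rw [← hx]
    exact Prod.ext (h.exact.apply_apply_eq_zero x) rfl

/-- Two `n`-th syzygies of the same module are stably isomorphic. -/
theorem IsSyzygy.exists_equiv {n : ℕ} (h : IsSyzygy n K X) (h' : IsSyzygy n L X) :
    ∃ P Q : ModuleCat.{u} B, Module.Projective B P ∧ Module.Finite B P ∧ Module.Projective B Q ∧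
      Module.Finite B Q ∧ Nonempty ((K × P) ≃ₗ[B] (L × Q)) := by
  induction n generalizing K L with
  | zero =>
    refine ⟨ModuleCat.of B PUnit.{u + 1}, ModuleCat.of B PUnit.{u + 1},
      inferInstanceAs (Module.Projective B PUnit.{u + 1}),
      inferInstanceAs (Module.Finite B PUnit.{u + 1}),
      inferInstanceAs (Module.Projective B PUnit.{u + 1}),
      inferInstanceAs (Module.Finite B PUnit.{u + 1}), ⟨?_⟩⟩
    exact (h.some.trans h'.some.symm).prodCongr (.refl B PUnit.{u + 1})
  | succ n ih =>
    obtain ⟨K', hK', P, i, g, _, _, h⟩ := h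
    obtain ⟨L', hL', Q, j, q, _, _, h'⟩ := h'
    obtain ⟨P', Q', _, _, _, _, ⟨e⟩⟩ := ih hK' hL'
    obtain ⟨iso⟩ := exists_equiv_of_isShortExact ((h.prod_id P').comp_equiv (.refl B K) e)
      (h'.prod_id Q')
    exact ⟨ModuleCat.of B (Q × Q'), ModuleCat.of B (P × P'),
      inferInstanceAs (Module.Projective B (Q × Q')), inferInstanceAs (Module.Finite B (Q × Q')),
      inferInstanceAs (Module.Projective B (P × P')), inferInstanceAs (Module.Finite B (P × P')),
      ⟨iso⟩⟩

/-- Syzygies of modules in `add N` lie in `add` of a syzygy of `N` and the regular module. -/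
theorem IsSyzygy.inAdd [IsNoetherianRing B] {n : ℕ} {N N' : ModuleCat.{u} B} [Module.Finite B N]
    (hX : InAdd B N X) (hN : IsSyzygy n N' N) (h : IsSyzygy n K X) :
    InAdd B (ModuleCat.of B (N' × B)) K := by
  obtain ⟨k, i, p, hip⟩ := hX
  have hp : Function.Surjective p := fun x => ⟨i x, LinearMap.congr_fun hip x⟩
  have e : (Fin k → N) ≃ₗ[B] LinearMap.ker p × X :=
    ((isShortExact_ker p hp).exact.splitSurjectiveEquiv Subtype.val_injective ⟨i, hip⟩).1
  have : Module.Finite B (LinearMap.ker p) :=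
    (IsSummand.fst.trans (.of_equiv e.symm)).finite
  obtain ⟨L, hL⟩ := exists_isSyzygy n (ModuleCat.of B (LinearMap.ker p))
  obtain ⟨P, Q, _, _, _, _, ⟨e'⟩⟩ := IsSyzygy.exists_equiv
    ((hL.prod h).congr (Y := ModuleCat.of B (Fin k → N)) (.refl B _) e.symm) (hN.pi k)
  refine InAdd.of_isSummand (Y := ModuleCat.of B ((Fin k → N') × Q))
    (IsSummand.snd.trans (IsSummand.fst.trans (.of_equiv e')))
    (.prod (X := ModuleCat.of B (Fin k → N'))
      (((InAdd.refl N').left (N' := ModuleCat.of B B)).pi k)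
      inAdd_of_projective.right)

/-- **Horseshoe lemma** for first syzygies. -/
theorem IsSyzygyOne.horseshoe {f : X →ₗ[B] Y} {g : Y →ₗ[B] Z} (h : IsShortExact f g)
    (hK : IsSyzygyOne K X) (hL : IsSyzygyOne L Z) :
    ∃ (T : ModuleCat.{u} B) (a : K →ₗ[B] T) (b : T →ₗ[B] L),
      IsSyzygyOne T Y ∧ IsShortExact a b := by
  obtain ⟨P, i, p, _, _, hP⟩ := hK
  obtain ⟨Q, j, q, _, _, hQ⟩ := hL
  obtain ⟨l, hl⟩ := Module.projective_lifting_property g q h.surj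
  have hl (y : Q) : g (l y) = q y := LinearMap.congr_fun hl y
  let G : P × Q →ₗ[B] Y := (f ∘ₗ p).coprod l
  have hgG (x : P × Q) : g (G x) = q x.2 := by simp [G, h.exact.apply_apply_eq_zero, hl]
  have hG : Function.Surjective G := by
    intro y
    obtain ⟨c, hc⟩ := hQ.surj (g y)
    obtain ⟨x, hx⟩ := (h.exact (y - l c)).1 (by simp [hl, hc])
    obtain ⟨d, rfl⟩ := hP.surj x
    exact ⟨(d, c), by simp [G, hx]⟩
  let a : K →ₗ[B] LinearMap.ker G := (LinearMap.inl B P Q ∘ₗ i).codRestrict _ fun k => by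
    simp [G, hP.exact.apply_apply_eq_zero]
  have hT (t : LinearMap.ker G) : t.1.2 ∈ LinearMap.range j :=
    (hQ.exact _).1 (by rw [← hgG, t.2, map_zero])
  let e := LinearEquiv.ofInjective j hQ.inj
  let b : LinearMap.ker G →ₗ[B] L := e.symm.toLinearMap ∘ₗ
    (LinearMap.snd B P Q ∘ₗ (LinearMap.ker G).subtype).codRestrict (LinearMap.range j) hT
  have hb (t : LinearMap.ker G) : j (b t) = t.1.2 :=
    congrArg Subtype.val (e.apply_symm_apply ⟨t.1.2, hT t⟩)
  refine ⟨ModuleCat.of B (LinearMap.ker G), a, b, ⟨ModuleCat.of B (P × Q), _, G,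
    inferInstanceAs (Module.Projective B (P × Q)), inferInstanceAs (Module.Finite B (P × Q)),
    isShortExact_ker G hG⟩, ?_, ?_, ?_⟩
  · exact fun x y hxy => hP.inj (congrArg (fun t : LinearMap.ker G => t.1.1) hxy)
  · intro t
    constructor
    · intro ht
      have h2 : t.1.2 = 0 := by rw [← hb t, ht, map_zero]
      have h1 : f (p t.1.1) = 0 := by
        have h0 : f (p t.1.1) + l t.1.2 = 0 := t.2
        rwa [h2, map_zero, add_zero] at h0
      obtain ⟨k, hk⟩ := (hP.exact _).1 (h.inj (h1.trans (map_zero f).symm))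
      exact ⟨k, Subtype.ext (Prod.ext hk h2.symm)⟩
    · rintro ⟨k, rfl⟩
      exact hQ.inj ((hb _).trans (map_zero j).symm)
  · intro y
    obtain ⟨x, hx⟩ := (h.exact (l (j y))).1 (by rw [hl, hQ.exact.apply_apply_eq_zero])
    obtain ⟨d, rfl⟩ := hP.surj x
    exact ⟨⟨(-d, j y), by simp [G, hx]⟩, hQ.inj (hb _)⟩

/-- **Horseshoe lemma**. -/
theorem IsSyzygy.horseshoe {n : ℕ} {f : X →ₗ[B] Y} {g : Y →ₗ[B] Z} (h : IsShortExact f g)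
    (hK : IsSyzygy n K X) (hL : IsSyzygy n L Z) :
    ∃ (T : ModuleCat.{u} B) (a : K →ₗ[B] T) (b : T →ₗ[B] L),
      IsSyzygy n T Y ∧ IsShortExact a b := by
  induction n generalizing K L with
  | zero =>
    obtain ⟨e⟩ := hK
    obtain ⟨e'⟩ := hL
    exact ⟨Y, _, _, ⟨.refl B Y⟩, h.comp_equiv e e'.symm⟩
  | succ n ih =>
    obtain ⟨K', hK', hK⟩ := hK
    obtain ⟨L', hL', hL⟩ := hL
    obtain ⟨T', a', b', hT', h'⟩ := ih hK' hL'
    obtain ⟨T, a, b, hT, hs⟩ := hK.horseshoe h' hL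
    exact ⟨T, a, b, ⟨T', hT', hT⟩, hs⟩

/-- Rotating a short exact sequence `0 → X → Y → Z → 0` gives a short exact sequence
`0 → ΩZ → X × F → Y → 0` with `F` projective. -/
theorem IsShortExact.rotate {f : X →ₗ[B] Y} {g : Y →ₗ[B] Z} (h : IsShortExact f g)
    [Module.Finite B Z] :
    ∃ (L F : ModuleCat.{u} B) (a : L →ₗ[B] X × F) (b : X × F →ₗ[B] Y),
      Module.Projective B F ∧ Module.Finite B F ∧ IsSyzygyOne L Z ∧ IsShortExact a b := by
  obtain ⟨k, q, hq⟩ := Module.Finite.exists_fin' B Z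
  obtain ⟨l, hl⟩ := Module.projective_lifting_property g q h.surj
  have hl (y : Fin k → B) : g (l y) = q y := LinearMap.congr_fun hl y
  let G : X × (Fin k → B) →ₗ[B] Y := f.coprod l
  have hG : Function.Surjective G := by
    intro y
    obtain ⟨c, hc⟩ := hq (g y)
    obtain ⟨x, hx⟩ := (h.exact (y - l c)).1 (by simp [hl, hc])
    exact ⟨(x, c), by simp [G, hx]⟩
  refine ⟨ModuleCat.of B (LinearMap.ker G), ModuleCat.of B (Fin k → B), (LinearMap.ker G).subtype,
    G, inferInstanceAs (Module.Projective B (Fin k → B)),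
    inferInstanceAs (Module.Finite B (Fin k → B)), ⟨ModuleCat.of B (Fin k → B),
      LinearMap.snd B X (Fin k → B) ∘ₗ (LinearMap.ker G).subtype, q,
      inferInstanceAs (Module.Projective B (Fin k → B)),
      inferInstanceAs (Module.Finite B (Fin k → B)), ?_, ?_, hq⟩, isShortExact_ker G hG⟩
  · rintro ⟨⟨x, c⟩, hx⟩ ⟨⟨y, d⟩, hy⟩ hxy
    have hxy : c = d := hxy
    subst hxy
    rw [LinearMap.mem_ker] at hx hy
    simp only [G, LinearMap.coprod_apply] at hx hy
    have : x = y := h.inj (add_right_cancel (hx.trans hy.symm))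
    subst this
    rfl
  · intro c
    constructor
    · intro hc
      obtain ⟨x, hx⟩ := (h.exact (l c)).1 (by rw [hl, hc])
      exact ⟨⟨(-x, c), by simp [G, hx]⟩, rfl⟩
    · rintro ⟨⟨⟨x, d⟩, hx⟩, rfl⟩
      have hx : f x + l d = 0 := by simpa [G] using hx
      have := congrArg g hx
      simpa [h.exact.apply_apply_eq_zero, hl] using this

theorem IsSyzygyOne.pdLT_succ {n : ℕ} (h : IsSyzygyOne K X) (hK : PdLT B K n) :
    PdLT B X (n + 1) := by
  obtain ⟨P, i, g, _, _, hs⟩ := h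
  exact hs.pdLT_right hK (pdLT_of_projective (by lia))

theorem IsSyzygyOne.pdLT_of_succ {n : ℕ} (h : IsSyzygyOne K X) (hX : PdLT B X (n + 1))
    (hn : 1 ≤ n) : PdLT B K n := by
  obtain ⟨P, i, g, _, _, hs⟩ := h
  exact hs.pdLT_left (pdLT_of_projective hn) hX

theorem IsSyzygy.pdLT_add {m n : ℕ} (h : IsSyzygy m K X) (hK : PdLT B K n) :
    PdLT B X (n + m) := by
  induction m generalizing K n with
  | zero => exact pdLT_congr h.some hK
  | succ m ih =>
    obtain ⟨K', hK', h⟩ := h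
    exact (ih hK' (h.pdLT_succ hK)).mono (by lia)

theorem IsSyzygy.pdLT_of_add {m n : ℕ} (h : IsSyzygy m K X) (hX : PdLT B X (n + m))
    (hn : 1 ≤ n) : PdLT B K n := by
  induction m generalizing K n with
  | zero => exact pdLT_congr h.some.symm hX
  | succ m ih =>
    obtain ⟨K', hK', h⟩ := h
    exact h.pdLT_of_succ (ih hK' (hX.mono (by lia)) (by lia)) hn

theorem IsSyzygy.finitePd {m : ℕ} (h : IsSyzygy m K X) (hX : FinitePd B X) : FinitePd B K := by
  obtain ⟨n, hn⟩ := hX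
  exact ⟨n + 1, h.pdLT_of_add (hn.mono (by lia)) (by lia)⟩

end Syzygy

section ProjectiveCover

variable {B : Type u} [Ring B] [IsArtinianRing B]

theorem exists_isSyzygyOf (M : ModuleCat.{u} B) [Module.Finite B M] :
    ∃ K : ModuleCat.{u} B, Module.Finite B K ∧ IsSyzygyOf B K M := by
  obtain ⟨k, g₀, hg₀⟩ := Module.Finite.exists_fin' B M
  obtain ⟨P, ⟨_, _, g, hg⟩, hmin⟩ := exists_minimalFor_of_wellFoundedLT
    (fun P : ModuleCat.{u} B => Module.Projective B P ∧ Module.Finite B P ∧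
      ∃ g : P →ₗ[B] M, Function.Surjective g) (fun P => Module.length B P)
    ⟨ModuleCat.of B (Fin k → B), inferInstanceAs (Module.Projective B (Fin k → B)),
      inferInstanceAs (Module.Finite B (Fin k → B)), g₀, hg₀⟩
  refine ⟨ModuleCat.of B (LinearMap.ker g), inferInstanceAs (Module.Finite B (LinearMap.ker g)),
    P, g, inferInstance, inferInstance, hg, fun L hL => ?_, ⟨.refl B _⟩⟩
  by_contra hL'
  have hgL : Function.Surjective (g ∘ₗ L.subtype) := by
    intro y
    obtain ⟨x, rfl⟩ := hg y
    obtain ⟨l, hl, z, hz, rfl⟩ := Submodule.mem_sup.1 (hL ▸ Submodule.mem_top : x ∈ L ⊔ _)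
    exact ⟨⟨l, hl⟩, by simp [LinearMap.mem_ker.1 hz]⟩
  obtain ⟨h₀, hh₀⟩ := Module.projective_lifting_property _ g hgL
  let h : Module.End B P := L.subtype ∘ₗ h₀
  have hgh (n : ℕ) (x : P) : g ((h ^ n) x) = g x := by
    induction n generalizing x with
    | zero => rfl
    | succ n ih => rw [pow_succ, Module.End.mul_apply, ih]; exact LinearMap.congr_fun hh₀ x
  obtain ⟨n, hn, hn1⟩ := (h.eventually_isCompl_ker_pow_range_pow.and
    (Filter.eventually_ge_atTop 1)).exists
  have hrange : LinearMap.range (h ^ n) ≤ L := by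
    rintro _ ⟨x, rfl⟩
    obtain ⟨m, rfl⟩ := Nat.exists_eq_add_of_le' hn1
    rw [pow_succ', Module.End.mul_apply]
    exact (h₀ _).2
  have hne : LinearMap.range (h ^ n) ≠ ⊤ := fun h0 => hL' (top_le_iff.1 (h0 ▸ hrange))
  have hproj : Module.Projective B (LinearMap.range (h ^ n)) :=
    Module.Projective.of_split (LinearMap.range (h ^ n)).subtype
      (Submodule.projectionOnto _ _ hn.symm)
      (by ext x; simp)
  have hsurj : Function.Surjective (g ∘ₗ (LinearMap.range (h ^ n)).subtype) := by
    intro y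
    obtain ⟨x, rfl⟩ := hg y
    exact ⟨⟨_, x, rfl⟩, hgh n x⟩
  have hlt := Submodule.length_lt hne
  exact hlt.not_ge (hmin (j := ModuleCat.of B (LinearMap.range (h ^ n)))
    ⟨hproj, inferInstanceAs (Module.Finite B (LinearMap.range (h ^ n))), _, hsurj⟩ hlt.le)

end ProjectiveCover

section Syzygy

variable {B : Type u} [Ring B]

theorem IsSyzygyOf.isSyzygyOne {K M : ModuleCat.{u} B} (h : IsSyzygyOf B K M) :
    IsSyzygyOne K M := by
  obtain ⟨P, g, hP, hP', hg, -, ⟨e⟩⟩ := h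
  exact ⟨P, _, _, hP, hP', (isShortExact_ker g hg).comp_equiv e (.refl B M)⟩

theorem IsNthSyzygy.isSyzygy {n : ℕ} {K M : ModuleCat.{u} B} (h : IsNthSyzygy B n K M) :
    IsSyzygy n K M := by
  induction n generalizing K with
  | zero => exact h
  | succ n ih =>
    obtain ⟨K', hK', h⟩ := h
    exact ⟨K', ih hK', h.isSyzygyOne⟩

theorem exists_isNthSyzygy [IsArtinianRing B] (n : ℕ) (M : ModuleCat.{u} B) [Module.Finite B M] :
    ∃ K : ModuleCat.{u} B, Module.Finite B K ∧ IsNthSyzygy B n K M := by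
  induction n with
  | zero => exact ⟨M, inferInstance, ⟨.refl B M⟩⟩
  | succ n ih =>
    obtain ⟨K', _, hK'⟩ := ih
    obtain ⟨K, hK, h⟩ := exists_isSyzygyOf K'
    exact ⟨K, hK, K', hK', h⟩

end Syzygy

section KrullSchmidt

variable {B : Type u} [Ring B]

theorem nontrivial_of_isLocalRing_end (E : Type u) [AddCommGroup E] [Module B E]
    [IsLocalRing (Module.End B E)] : Nontrivial E := by
  by_contra h0
  rw [not_nontrivial_iff_subsingleton] at h0
  exact zero_ne_one (α := Module.End B E) (Subsingleton.elim _ _)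

/-- A summand with local endomorphism ring of a product is a summand of one of the factors. -/
theorem IsSummand.of_prod {E X Y : Type u} [AddCommGroup E] [Module B E] [AddCommGroup X]
    [Module B X] [AddCommGroup Y] [Module B Y] [IsLocalRing (Module.End B E)]
    (h : IsSummand B E (X × Y)) : IsSummand B E X ∨ IsSummand B E Y := by
  obtain ⟨i, p, hip⟩ := h
  let a : Module.End B E := (p ∘ₗ LinearMap.inl B X Y) ∘ₗ (LinearMap.fst B X Y ∘ₗ i)
  let b : Module.End B E := (p ∘ₗ LinearMap.inr B X Y) ∘ₗ (LinearMap.snd B X Y ∘ₗ i)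
  have hab : a + b = 1 := by
    ext x
    simp only [a, b, LinearMap.add_apply, LinearMap.comp_apply, ← map_add]
    simpa using LinearMap.congr_fun hip x
  rcases IsLocalRing.isUnit_or_isUnit_of_isUnit_add (hab ▸ isUnit_one) with h | h
  · obtain ⟨c, hc⟩ := h.exists_left_inv
    exact .inl ⟨_, c ∘ₗ (p ∘ₗ LinearMap.inl B X Y), hc⟩
  · obtain ⟨c, hc⟩ := h.exists_left_inv
    exact .inr ⟨_, c ∘ₗ (p ∘ₗ LinearMap.inr B X Y), hc⟩

/-- A summand with local endomorphism ring of a power is a summand of the base. -/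
theorem IsSummand.of_pow {E X : Type u} [AddCommGroup E] [Module B E] [AddCommGroup X]
    [Module B X] [IsLocalRing (Module.End B E)] {k : ℕ}
    (h : IsSummand B E (Fin k → X)) : IsSummand B E X := by
  obtain ⟨i, p, hip⟩ := h
  let a (j : Fin k) : Module.End B E :=
    (p ∘ₗ LinearMap.single B (fun _ => X) j) ∘ₗ (LinearMap.proj j ∘ₗ i)
  have ha : ∑ j, a j = 1 := by
    ext x
    simp only [a, LinearMap.sum_apply, LinearMap.comp_apply, ← map_sum]
    have : ∑ j, LinearMap.single B (fun _ => X) j (i x j) = i x :=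
      Finset.univ_sum_single (i x)
    simp only [LinearMap.proj_apply, this]
    exact LinearMap.congr_fun hip x
  obtain ⟨j, -, hj⟩ := IsLocalRing.exists_of_isUnit_sum (ha ▸ isUnit_one)
  obtain ⟨c, hc⟩ := hj.exists_left_inv
  exact ⟨_, c ∘ₗ (p ∘ₗ LinearMap.single B (fun _ => X) j), hc⟩

theorem IsSummand.nonempty_equiv {E X : Type u} [AddCommGroup E] [Module B E] [AddCommGroup X]
    [Module B X] [Nontrivial E] [IsLocalRing (Module.End B X)] (h : IsSummand B E X) :
    Nonempty (E ≃ₗ[B] X) := by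
  obtain ⟨i, p, hip⟩ := h
  have hpi (x : E) : p (i x) = x := LinearMap.congr_fun hip x
  let a : Module.End B X := i ∘ₗ p
  have hinj : Function.Injective i := fun x y hxy => by rw [← hpi x, hxy, hpi]
  refine ⟨LinearEquiv.ofBijective i ⟨hinj, ?_⟩⟩
  rcases IsLocalRing.isUnit_or_isUnit_of_isUnit_add
      ((add_sub_cancel a 1).symm ▸ isUnit_one : IsUnit (a + (1 - a))) with h | h
  · intro x
    obtain ⟨y, hy⟩ := ((Module.End.isUnit_iff a).1 h).2 x
    exact ⟨p y, hy⟩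
  · obtain ⟨x, hx⟩ := exists_ne (0 : E)
    have h0 : (1 - a : Module.End B X) (i x) = 0 := by simp [a, hpi]
    have := ((Module.End.isUnit_iff _).1 h).1 (h0.trans (map_zero _).symm)
    exact absurd (hinj (this.trans (map_zero i).symm)) hx

variable [IsArtinianRing B]

/-- A nonzero finitely generated module has a direct summand with local endomorphism ring. -/
theorem exists_isLocalRing_end_summand (X : ModuleCat.{u} B) [Module.Finite B X] [Nontrivial X] :
    ∃ E X' : ModuleCat.{u} B, IsLocalRing (Module.End B E) ∧ Module.Finite B E ∧
      Module.Finite B X' ∧ Nonempty (X ≃ₗ[B] E × X') := by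
  induction h : Module.length B X using WellFoundedLT.induction generalizing X with
  | ind l ih =>
  subst h
  by_cases hloc : IsLocalRing (Module.End B X)
  · exact ⟨X, ModuleCat.of B PUnit.{u + 1}, hloc, inferInstance,
      inferInstanceAs (Module.Finite B PUnit.{u + 1}), ⟨LinearEquiv.prodUnique.symm⟩⟩
  have : ∃ f : Module.End B X, ¬ IsUnit f ∧ ¬ IsUnit (1 - f) := by
    by_contra! hf
    exact hloc (IsLocalRing.of_isUnit_or_isUnit_one_sub_self fun f =>
      or_iff_not_imp_left.2 (hf f))
  obtain ⟨f, hf, hf'⟩ := this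
  obtain ⟨n, hn, hn1⟩ := (f.eventually_isCompl_ker_pow_range_pow.and
    (Filter.eventually_ge_atTop 1)).exists
  have hker : LinearMap.ker (f ^ n) ≠ ⊥ := by
    intro h0
    have hinj : Function.Injective (f ^ n : Module.End B X) := LinearMap.ker_eq_bot.1 h0
    have : IsUnit (f ^ n) :=
      (Module.End.isUnit_iff _).2 (IsArtinian.bijective_of_injective_endomorphism _ hinj)
    exact hf ((isUnit_pow_iff (by lia)).1 this)
  have hrange : LinearMap.range (f ^ n) ≠ ⊥ := by
    intro h0
    exact hf' (IsNilpotent.isUnit_one_sub ⟨n, LinearMap.range_eq_bot.1 h0⟩)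
  have hker' : LinearMap.ker (f ^ n) ≠ ⊤ := by
    intro h0
    have := hn.disjoint
    rw [h0, top_disjoint] at this
    exact hrange this
  have : Nontrivial (LinearMap.ker (f ^ n)) := Submodule.nontrivial_iff_ne_bot.2 hker
  have : Nontrivial (ModuleCat.of B (LinearMap.ker (f ^ n))) := this
  have : Module.Finite B (ModuleCat.of B (LinearMap.ker (f ^ n))) :=
    inferInstanceAs (Module.Finite B (LinearMap.ker (f ^ n)))
  obtain ⟨E, X', hE, hE', hX', ⟨e⟩⟩ := ih _ (Submodule.length_lt hker')
    (ModuleCat.of B (LinearMap.ker (f ^ n))) rfl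
  exact ⟨E, ModuleCat.of B (X' × LinearMap.range (f ^ n)), hE, hE',
    inferInstanceAs (Module.Finite B (X' × LinearMap.range (f ^ n))),
    ⟨(Submodule.prodEquivOfIsCompl _ _ hn).symm.trans
      ((e.prodCongr (.refl B _)).trans (LinearEquiv.prodAssoc B E X' _))⟩⟩

/-- Induction over finitely generated modules, adding one summand with local endomorphism ring
at a time. -/
theorem finite_module_induction {motive : ModuleCat.{u} B → Prop}
    (equiv : ∀ X Y : ModuleCat.{u} B, (X ≃ₗ[B] Y) → motive X → motive Y)
    (zero : motive (ModuleCat.of B PUnit.{u + 1}))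
    (prod : ∀ E X : ModuleCat.{u} B, IsLocalRing (Module.End B E) → Module.Finite B E →
      Module.Finite B X → motive X → motive (ModuleCat.of B (E × X)))
    (X : ModuleCat.{u} B) [Module.Finite B X] : motive X := by
  induction h : Module.length B X using WellFoundedLT.induction generalizing X with
  | ind l ih =>
  subst h
  rcases subsingleton_or_nontrivial X with hX | hX
  · exact equiv _ _ (0 : PUnit.{u + 1} ≃ₗ[B] X) zero
  obtain ⟨E, X', hE, _, _, ⟨e⟩⟩ := exists_isLocalRing_end_summand X
  have hE' : Nontrivial E := nontrivial_of_isLocalRing_end (B := B) E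
  refine equiv (ModuleCat.of B (E × X')) X e.symm (prod E X' hE ‹_› ‹_› (ih _ ?_ X' rfl))
  rw [e.length_eq, Module.length_prod, add_comm]
  exact lt_of_eq_of_lt (add_zero _).symm
    ((ENat.add_lt_add_iff_left Module.length_ne_top).2 Module.length_pos)

/-- Up to isomorphism, `add N` has only finitely many objects with local endomorphism ring. -/
theorem exists_finite_family (N : ModuleCat.{u} B) [Module.Finite B N] :
    ∃ (ι : Type) (_ : Fintype ι) (D : ι → ModuleCat.{u} B),
      ∀ E : ModuleCat.{u} B, IsLocalRing (Module.End B E) → InAdd B N E →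
        ∃ i, Nonempty (E ≃ₗ[B] D i) := by
  suffices ∃ (ι : Type) (_ : Fintype ι) (D : ι → ModuleCat.{u} B),
      ∀ E : ModuleCat.{u} B, IsLocalRing (Module.End B E) → IsSummand B E N →
        ∃ i, Nonempty (E ≃ₗ[B] D i) by
    obtain ⟨ι, hι, D, hD⟩ := this
    refine ⟨ι, hι, D, fun E hE h => hD E hE ?_⟩
    obtain ⟨k, hk⟩ := inAdd_iff.1 h
    exact hk.of_pow
  induction N using finite_module_induction with
  | equiv X Y e h =>
    obtain ⟨ι, hι, D, hD⟩ := h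
    exact ⟨ι, hι, D, fun E hE h => hD E hE (h.trans (.of_equiv e.symm))⟩
  | zero =>
    refine ⟨Empty, inferInstance, Empty.elim, fun E hE ⟨i, p, hip⟩ => ?_⟩
    have := nontrivial_of_isLocalRing_end (B := B) E
    obtain ⟨x, hx⟩ := exists_ne (0 : E)
    refine absurd ?_ hx
    exact (LinearMap.congr_fun hip x).symm.trans (map_zero p)
  | prod E₀ X hE₀ _ _ h =>
    obtain ⟨ι, hι, D, hD⟩ := h
    refine ⟨Option ι, inferInstance, fun o => o.elim E₀ D, fun E hE h => ?_⟩
    rcases h.of_prod with h | h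
    · have := nontrivial_of_isLocalRing_end (B := B) E
      exact ⟨none, h.nonempty_equiv⟩
    · obtain ⟨i, hi⟩ := hD E hE h
      exact ⟨some i, hi⟩

/-- The objects of finite projective dimension of `add N` have bounded projective dimension. -/
theorem exists_pdLT_of_inAdd (N : ModuleCat.{u} B) [Module.Finite B N] :
    ∃ d : ℕ, ∀ X : ModuleCat.{u} B, InAdd B N X → FinitePd B X → PdLT B X d := by
  obtain ⟨ι, _, D, hD⟩ := exists_finite_family N
  have (i : ι) : ∃ d, FinitePd B (D i) → PdLT B (D i) d := by
    by_cases h : FinitePd B (D i)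
    · exact h.imp fun _ h _ => h
    · exact ⟨0, fun h' => absurd h' h⟩
  choose d hd using this
  refine ⟨max 1 (Finset.univ.sup d), fun X hX => ?_⟩
  have := hX.finite
  refine finite_module_induction
    (motive := fun X => InAdd B N X → FinitePd B X → PdLT B X (max 1 (Finset.univ.sup d)))
    ?_ ?_ ?_ X hX
  · exact fun X Y e ih hY h => pdLT_congr e
      (ih (hY.of_isSummand (.of_equiv e)) ((IsSummand.of_equiv e).finitePd h))
  · exact fun _ _ => pdLT_of_projective (le_max_left ..)
  · intro E X hE _ _ ih hX hY
    refine .prod ?_ (ih (hX.of_isSummand .snd) (IsSummand.snd.finitePd hY))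
    obtain ⟨i, ⟨e⟩⟩ := hD E hE (hX.of_isSummand .fst)
    refine pdLT_congr e.symm (.mono ?_
      (hd i ((IsSummand.of_equiv e.symm).finitePd (IsSummand.fst.finitePd hY))))
    exact (Finset.le_sup (f := d) (Finset.mem_univ i)).trans (le_max_right ..)

/-- The direct sum of `a i` copies of `D i`. -/
abbrev piPow {ι : Type} (D : ι → ModuleCat.{u} B) (a : ι → ℕ) : Type u :=
  (i : ι) → Fin (a i) → D i

/-- Direct sums with multiplicities are additive in the multiplicities. -/
def piPowAdd {ι : Type} (D : ι → ModuleCat.{u} B) (a b : ι → ℕ) :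
    piPow D (a + b) ≃ₗ[B] piPow D a × piPow D b :=
  (LinearEquiv.piCongrRight fun i => (LinearEquiv.funCongrLeft B (D i) finSumFinEquiv).trans
      (LinearEquiv.sumArrowLequivProdArrow (Fin (a i)) (Fin (b i)) B (D i))).trans
    { toFun := fun f => (fun i => (f i).1, fun i => (f i).2)
      invFun := fun f i => (f.1 i, f.2 i)
      map_add' := fun _ _ => rfl
      map_smul' := fun _ _ => rfl }

/-- A direct sum with multiplicities having a single nonzero entry. -/
def piPowSingle {ι : Type} [DecidableEq ι] (D : ι → ModuleCat.{u} B) (i : ι) :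
    piPow D (Pi.single i 1) ≃ₗ[B] D i where
  toFun f := f i ⟨0, by simp⟩
  map_add' _ _ := rfl
  map_smul' _ _ := rfl
  invFun x j _ := Pi.single (M := fun j => D j) i x j
  left_inv f := by
    funext j t
    rcases eq_or_ne j i with rfl | h
    · have h0 : t = ⟨0, by simp⟩ := by
        have := t.2
        simp only [Pi.single_eq_same] at this
        exact Fin.ext (by simp; lia)
      simp [h0]
    · have := t.2
      simp [Pi.single_eq_of_ne h] at this
  right_inv x := by simp

/-- **Krull–Schmidt**: every object of `add N` is a direct sum of copies of finitely many
modules. -/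
theorem exists_piPow (N : ModuleCat.{u} B) [Module.Finite B N] :
    ∃ (ι : Type) (_ : Fintype ι) (D : ι → ModuleCat.{u} B), (∀ i, Module.Finite B (D i)) ∧
      ∀ X : ModuleCat.{u} B, InAdd B N X → ∃ a : ι → ℕ, Nonempty (X ≃ₗ[B] piPow D a) := by
  classical
  obtain ⟨ι₀, _, D₀, hD₀⟩ := exists_finite_family N
  let ι := {i : ι₀ // Module.Finite B (D₀ i)}
  let D (i : ι) : ModuleCat.{u} B := D₀ i.1
  refine ⟨ι, inferInstance, D, fun i => i.2, fun X hX => ?_⟩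
  have := hX.finite
  refine finite_module_induction
    (motive := fun X => InAdd B N X → ∃ a : ι → ℕ, Nonempty (X ≃ₗ[B] piPow D a)) ?_ ?_ ?_ X hX
  · intro X Y e ih hY
    obtain ⟨a, ⟨e'⟩⟩ := ih (hY.of_isSummand (.of_equiv e))
    exact ⟨a, ⟨e.symm.trans e'⟩⟩
  · intro
    have : Subsingleton (piPow D 0) := ⟨fun f g => by funext i t; exact Fin.elim0 t⟩
    exact ⟨0, ⟨(0 : PUnit.{u + 1} ≃ₗ[B] piPow D 0)⟩⟩
  · intro E X hE _ _ ih hX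
    obtain ⟨a, ⟨e'⟩⟩ := ih (hX.of_isSummand .snd)
    obtain ⟨i, ⟨e⟩⟩ := hD₀ E hE (hX.of_isSummand .fst)
    let i' : ι := ⟨i, Module.Finite.equiv e⟩
    exact ⟨Pi.single i' 1 + a, ⟨((e.trans (piPowSingle D i').symm).prodCongr e').trans
      (piPowAdd D _ _).symm⟩⟩

end KrullSchmidt

section ExtInjective

open CategoryTheory Abelian

variable {B : Type u} [Ring B]

/-- The maps induced by `f` on `Ext^i(-, S)` are injective for all `S` and all `i ≥ n`. -/
def ExtInjective {X Y : Type u} [AddCommGroup X] [Module B X] [AddCommGroup Y] [Module B Y]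
    (f : X →ₗ[B] Y) (n : ℕ) : Prop :=
  ∀ i, n ≤ i → ∀ (S : ModuleCat.{u} B) (y : Ext (ModuleCat.of B Y) S i),
    (Ext.mk₀ (ModuleCat.ofHom f)).comp y (zero_add i) = 0 → y = 0

variable {X Y Z : Type u} [AddCommGroup X] [Module B X] [AddCommGroup Y] [Module B Y]
  [AddCommGroup Z] [Module B Z]

theorem ExtInjective.comp {f : X →ₗ[B] Y} {g : Y →ₗ[B] Z} {n : ℕ} (hg : ExtInjective g n)
    (hf : ExtInjective f n) : ExtInjective (g ∘ₗ f) n := by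
  intro i hi S y hy
  refine hg i hi S y (hf i hi S _ ?_)
  rwa [Ext.mk₀_comp_mk₀_assoc]

theorem ExtInjective.of_rightInverse {f : X →ₗ[B] Y} {g : Y →ₗ[B] X}
    (h : f ∘ₗ g = LinearMap.id) (n : ℕ) : ExtInjective f n := by
  intro i hi S y hy
  have h1 : ModuleCat.ofHom g ≫ ModuleCat.ofHom f = 𝟙 (ModuleCat.of B Y) := by
    rw [← ModuleCat.ofHom_comp, h]; rfl
  rw [← Ext.mk₀_id_comp y, ← h1, ← Ext.mk₀_comp_mk₀_assoc, hy, Ext.comp_zero]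

theorem ExtInjective.pow {f : Module.End B X} {n : ℕ} (hf : ExtInjective f n) (m : ℕ) :
    ExtInjective (f ^ m) n := by
  induction m with
  | zero => exact .of_rightInverse (g := LinearMap.id) rfl n
  | succ m ih => rw [pow_succ]; exact ih.comp hf

theorem IsShortExact.extInjective {f : X →ₗ[B] Y} {g : Y →ₗ[B] Z} (h : IsShortExact f g) {n : ℕ}
    (hZ : PdLT B Z n) : ExtInjective f n := by
  intro i hi S y hy
  obtain ⟨z, hz⟩ := Ext.contravariant_sequence_exact₂ h.shortExact S y hy
  have hZ : HasProjectiveDimensionLT (ModuleCat.of B Z) n := hZ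
  have : z = 0 := Ext.eq_zero_of_hasProjectiveDimensionLT (X := ModuleCat.of B Z) z n hi
  rw [← hz, this, Ext.comp_zero]

/-- If `Y` is a summand of `X` such that `q ∘ f = 0` for the projection `q : X → Y` and `f` is
injective on `Ext`, then `Y` has finite projective dimension. -/
theorem ExtInjective.pdLT {f : X →ₗ[B] X} {n : ℕ} (hf : ExtInjective f n) {j : Y →ₗ[B] X}
    {q : X →ₗ[B] Y} (hq : q ∘ₗ j = LinearMap.id) (h0 : q ∘ₗ f = 0) : PdLT B Y n := by
  refine (hasProjectiveDimensionLT_iff _ _).2 fun i hi S y => ?_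
  refine ExtInjective.of_rightInverse hq n i hi S y (hf i hi S _ ?_)
  rw [Ext.mk₀_comp_mk₀_assoc, ← ModuleCat.ofHom_comp, h0]
  exact (congrArg (fun t => Ext.comp t y (zero_add i)) (Ext.mk₀_zero _ _)).trans (Ext.zero_comp ..)

end ExtInjective

section IgusaTodorov

variable {B : Type u} [Ring B]

/-- A direct sum of copies of the `D i` lies in `add` of the sum of the `D i`. -/
theorem inAdd_piPow {ι : Type} [Fintype ι] (D : ι → ModuleCat.{u} B) (a : ι → ℕ) :
    InAdd B (ModuleCat.of B ((i : ι) → D i)) (ModuleCat.of B (piPow D a)) := by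
  have ha (i : ι) : a i ≤ Finset.univ.sup a := Finset.le_sup (Finset.mem_univ i)
  refine ⟨Finset.univ.sup a,
    { toFun := fun f t i => if h : t < a i then f i ⟨t, h⟩ else 0
      map_add' := fun f g => ?_
      map_smul' := fun c f => ?_ },
    { toFun := fun f i t => f (Fin.castLE (ha i) t) i
      map_add' := fun _ _ => rfl
      map_smul' := fun _ _ => rfl }, ?_⟩
  · funext t i
    by_cases h : t < a i <;> simp [h]
  · funext t i
    by_cases h : t < a i <;> simp [h]
  · refine LinearMap.ext fun f => ?_
    funext i t
    simp

/-- The multiplicity vectors `a` and `b` define modules with a common `t`-th syzygy. -/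
def HaveCommonSyzygy {ι : Type} (D : ι → ModuleCat.{u} B) (t : ℕ) (a b : ι → ℕ) : Prop :=
  ∃ K : ModuleCat.{u} B, IsSyzygy t K (ModuleCat.of B (piPow D a)) ∧
    IsSyzygy t K (ModuleCat.of B (piPow D b))

theorem IsSyzygy.piPow_add {ι : Type} {D : ι → ModuleCat.{u} B} {t : ℕ} {a b : ι → ℕ}
    {K L : ModuleCat.{u} B} (hK : IsSyzygy t K (ModuleCat.of B (piPow D a)))
    (hL : IsSyzygy t L (ModuleCat.of B (piPow D b))) :
    IsSyzygy t (ModuleCat.of B (K × L)) (ModuleCat.of B (piPow D (a + b))) :=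
  (hK.prod hL).congr (.refl B _) (piPowAdd D a b).symm

theorem HaveCommonSyzygy.add {ι : Type} {D : ι → ModuleCat.{u} B} {t : ℕ} {a b a' b' : ι → ℕ}
    (h : HaveCommonSyzygy D t a b) (h' : HaveCommonSyzygy D t a' b') :
    HaveCommonSyzygy D t (a + a') (b + b') := by
  obtain ⟨K, ha, hb⟩ := h
  obtain ⟨K', haK, hbK⟩ := h'
  exact ⟨_, ha.piPow_add haK, hb.piPow_add hbK⟩

/-- If `0 → K → T → L → 0` is exact with `T` and `K` stably isomorphic and `L` of finite projective
dimension, then the projective dimension of `L` is bounded in terms of the projective dimensions of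
the summands of `K × Q`. -/
theorem pdLT_of_stable_equiv [IsArtinianRing B] {K T L P Q : ModuleCat.{u} B}
    [Module.Finite B K] [Module.Finite B Q]
    [Module.Projective B P] [Module.Projective B Q] {a : K →ₗ[B] T} {b : T →ₗ[B] L}
    (h : IsShortExact a b) (e : (T × P) ≃ₗ[B] (K × Q)) (hL : FinitePd B L) {d : ℕ}
    (hd : ∀ W : ModuleCat.{u} B, IsSummand B W (K × Q) → FinitePd B W → PdLT B W d) :
    PdLT B L (d + 3) := by
  let f : Module.End B (K × Q) :=
    ((e.toLinearMap ∘ₗ LinearMap.inl B T P) ∘ₗ a) ∘ₗ LinearMap.fst B K Q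
  let π : K × Q →ₗ[B] L × P := (b.prodMap LinearMap.id) ∘ₗ e.symm.toLinearMap
  have hf (v : K × Q) : f v = e (a v.1, 0) := rfl
  have hf0 (v : K × Q) : f v = 0 ↔ v.1 = 0 := by
    rw [hf, e.map_eq_zero_iff, Prod.mk_eq_zero, and_iff_left rfl, ← map_eq_zero_iff a h.inj]
  have hπ (v : K × Q) : π v = 0 ↔ ∃ w, f w = v := by
    constructor
    · intro hv
      obtain ⟨h1, h2⟩ := Prod.ext_iff.1 hv
      obtain ⟨k, hk⟩ := (h.exact _).1 h1
      refine ⟨(k, 0), e.symm.injective ?_⟩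
      rw [hf, e.symm_apply_apply]
      exact Prod.ext hk h2.symm
    · rintro ⟨w, rfl⟩
      have : e.symm (f w) = (a w.1, 0) := e.symm_apply_apply _
      simp [π, this, h.exact.apply_apply_eq_zero]
  have hπs : Function.Surjective π :=
    (h.surj.prodMap Function.surjective_id).comp e.symm.surjective
  have hinj : ∃ n, ExtInjective f n := by
    obtain ⟨n, hn⟩ := hL
    refine ⟨max 1 n, ExtInjective.comp (.comp (.comp ?_ ?_) ?_) ?_⟩
    · exact .of_rightInverse (g := e.symm.toLinearMap) (by ext : 1 <;> simp) _
    · exact IsShortExact.of_prod.extInjective (pdLT_of_projective (le_max_left ..))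
    · exact h.extInjective (hn.mono (le_max_right ..))
    · exact .of_rightInverse (LinearMap.fst_comp_inl B K Q) _
  obtain ⟨n, hn⟩ := hinj
  obtain ⟨m, hm, hm1⟩ := (f.eventually_isCompl_ker_pow_range_pow.and
    (Filter.eventually_ge_atTop 1)).exists
  obtain ⟨m, rfl⟩ := Nat.exists_eq_add_of_le' hm1
  have hpow (v : K × Q) : (f ^ (m + 1)) (f v) = f ((f ^ (m + 1)) v) := by
    rw [← Module.End.mul_apply, ← Module.End.mul_apply, (Commute.pow_self f (m + 1)).eq]
  let W : Submodule B (K × Q) := LinearMap.ker (f ^ (m + 1))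
  let q : K × Q →ₗ[B] W := Submodule.projectionOnto _ _ hm
  have hq : q ∘ₗ W.subtype = LinearMap.id := by ext x : 1; simp [q, W]
  have hW : PdLT B W d := by
    refine hd (ModuleCat.of B W) ⟨W.subtype, q, hq⟩ ⟨n, (hn.pow (m + 1)).pdLT hq ?_⟩
    exact LinearMap.ext fun x => (Submodule.projectionOnto_apply_eq_zero_iff hm).2 ⟨x, rfl⟩
  have hfW (w : K × Q) (hw : w ∈ W) : f w ∈ W := by
    change (f ^ (m + 1)) (f w) = 0
    rw [hpow, LinearMap.mem_ker.1 hw, map_zero]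
  let N : Submodule B W := LinearMap.range (f.restrict hfW)
  let inr : Q →ₗ[B] W := (LinearMap.inr B K Q).codRestrict W fun x => by
    change (f ^ (m + 1)) _ = 0
    rw [pow_succ, Module.End.mul_apply, (hf0 _).2 rfl, map_zero]
  have h1 : IsShortExact (Z := N) inr (f.restrict hfW).rangeRestrict := by
    refine ⟨fun x y hxy => congrArg (fun w : W => w.1.2) hxy, fun w => ?_,
      LinearMap.surjective_rangeRestrict _⟩
    have : (f.restrict hfW).rangeRestrict w = 0 ↔ f w.1 = 0 := by
      rw [Subtype.ext_iff, Subtype.ext_iff]; rfl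
    rw [this, hf0]
    constructor
    · exact fun hw => ⟨w.1.2, Subtype.ext (Prod.ext hw.symm rfl)⟩
    · rintro ⟨x, rfl⟩; rfl
  have h2 : IsShortExact (X := N) N.subtype (π ∘ₗ W.subtype) := by
    refine ⟨Subtype.val_injective, fun w => ?_, fun z => ?_⟩
    · constructor
      · intro hw
        obtain ⟨v, hv⟩ := (hπ _).1 hw
        obtain ⟨w', hw', u, ⟨x, rfl⟩, rfl⟩ := Submodule.mem_sup.1
          (hm.sup_eq_top ▸ Submodule.mem_top : v ∈ W ⊔ LinearMap.range (f ^ (m + 1)))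
        have h3 : f ((f ^ (m + 1)) x) = 0 := by
          refine (Submodule.disjoint_def.1 hm.disjoint) _ ?_ ⟨f x, hpow x⟩
          have : f ((f ^ (m + 1)) x) = w.1 - f w' := by
            rw [← W.subtype_apply w, ← hv, map_add, add_sub_cancel_left]
          rw [this]
          exact W.sub_mem w.2 (hfW w' hw')
        rw [map_add, h3, add_zero] at hv
        exact ⟨⟨w, ⟨w', hw'⟩, Subtype.ext hv⟩, rfl⟩
      · rintro ⟨⟨_, w', rfl⟩, rfl⟩
        exact (hπ _).2 ⟨w'.1, rfl⟩
    · obtain ⟨v, rfl⟩ := hπs z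
      obtain ⟨w', hw', u, ⟨x, rfl⟩, rfl⟩ := Submodule.mem_sup.1
        (hm.sup_eq_top ▸ Submodule.mem_top : v ∈ W ⊔ LinearMap.range (f ^ (m + 1)))
      refine ⟨⟨w', hw'⟩, ?_⟩
      have : π ((f ^ (m + 1)) x) = 0 := (hπ _).2 ⟨(f ^ m) x, by
        rw [pow_succ', Module.End.mul_apply]⟩
      rw [map_add, this, add_zero]; rfl
  have hN : PdLT B N (d + 1 + 1) :=
    h1.pdLT_right (pdLT_of_projective (by lia)) (hW.mono (by lia))
  exact IsSummand.fst.pdLT (h2.pdLT_right hN (hW.mono (by lia)))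

variable [IsArtinianRing B] {ι : Type} [Fintype ι] {D : ι → ModuleCat.{u} B}
  [∀ i, Module.Finite B (D i)]

theorem HaveCommonSyzygy.refl (t : ℕ) (a : ι → ℕ) : HaveCommonSyzygy D t a a := by
  have : Module.Finite B (ModuleCat.of B (piPow D a)) :=
    inferInstanceAs (Module.Finite B (piPow D a))
  obtain ⟨K, hK⟩ := exists_isSyzygy t (ModuleCat.of B (piPow D a))
  exact ⟨K, hK, hK⟩

theorem HaveCommonSyzygy.succ {t : ℕ} {a b : ι → ℕ} (h : HaveCommonSyzygy D t a b) :
    HaveCommonSyzygy D (t + 1) a b := by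
  obtain ⟨K, ha, hb⟩ := h
  have : Module.Finite B (ModuleCat.of B (piPow D a)) :=
    inferInstanceAs (Module.Finite B (piPow D a))
  have := ha.finite
  obtain ⟨L, hL⟩ := exists_isSyzygyOne K
  exact ⟨L, ⟨K, ha, hL⟩, ⟨K, hb, hL⟩⟩

variable (D) in
/-- The group of differences of multiplicity vectors of modules with a common `t`-th syzygy. -/
def syzygyRelations (t : ℕ) : Submodule ℤ (ι → ℤ) :=
  AddSubgroup.toIntSubmodule
    { carrier := {z | ∃ a b : ι → ℕ, HaveCommonSyzygy D t a b ∧ ∀ i, z i = a i - b i}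
      zero_mem' := ⟨0, 0, .refl t 0, by simp⟩
      add_mem' := by
        rintro z w ⟨a, b, h, hz⟩ ⟨a', b', h', hw⟩
        refine ⟨_, _, h.add h', fun i => ?_⟩
        simp only [Pi.add_apply, hz, hw, Nat.cast_add]
        ring
      neg_mem' := by
        rintro z ⟨a, b, ⟨K, ha, hb⟩, hz⟩
        exact ⟨b, a, ⟨K, hb, ha⟩, fun i => by simp [hz]⟩ }

theorem mem_syzygyRelations {t : ℕ} {z : ι → ℤ} : z ∈ syzygyRelations D t ↔
    ∃ a b : ι → ℕ, HaveCommonSyzygy D t a b ∧ ∀ i, z i = a i - b i := Iff.rfl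

theorem exists_syzygyRelations_le :
    ∃ n, ∀ t, syzygyRelations D t ≤ syzygyRelations D n := by
  have hmono : Monotone (syzygyRelations D) := monotone_nat_of_le_succ fun t z hz => by
    obtain ⟨a, b, h, hz⟩ := mem_syzygyRelations.1 hz
    exact mem_syzygyRelations.2 ⟨a, b, h.succ, hz⟩
  obtain ⟨n, hn⟩ := monotone_stabilizes_iff_noetherian.2
    (inferInstance : IsNoetherian ℤ (ι → ℤ)) ⟨_, hmono⟩
  exact ⟨n, fun t => (hmono (le_max_left t n)).trans (hn _ (le_max_right t n)).ge⟩

/-- If `0 → X → Z → C → 0` is exact and `C` has finite projective dimension, then `X` and `Z` have a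
common syzygy. -/
theorem IsShortExact.exists_common_syzygy {X Z C : ModuleCat.{u} B} [Module.Finite B X]
    [Module.Finite B Z] {f : X →ₗ[B] Z} {g : Z →ₗ[B] C} (h : IsShortExact f g)
    (hC : FinitePd B C) :
    ∃ (t : ℕ) (K : ModuleCat.{u} B), IsSyzygy t K X ∧ IsSyzygy t K Z := by
  obtain ⟨n, hn⟩ := hC
  have : Module.Finite B C := Module.Finite.of_surjective g h.surj
  obtain ⟨K, hK⟩ := exists_isSyzygy n X
  obtain ⟨L, hL⟩ := exists_isSyzygy n C
  have := hK.finite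
  have := hL.finite
  have : Module.Projective B L :=
    projective_iff_pdLT_one.2 (hL.pdLT_of_add (hn.mono (by lia)) le_rfl)
  obtain ⟨T, a, b, hT, hs⟩ := IsSyzygy.horseshoe h hK hL
  obtain ⟨e⟩ := hs.exists_equiv_of_projective
  obtain ⟨K', hK'⟩ := exists_isSyzygyOne K
  have hL' : IsSyzygyOne (ModuleCat.of B PUnit.{u + 1}) L :=
    ⟨L, 0, LinearMap.id, inferInstance, inferInstance, Function.injective_of_subsingleton _,
      fun x => by simp [eq_comm], Function.surjective_id⟩
  exact ⟨n + 1, K', ⟨K, hK, hK'⟩, T, hT, (hK'.prod hL').congr LinearEquiv.prodUnique.symm e.symm⟩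

/-- The cokernels of finite projective dimension of monomorphisms in `add N` have bounded
projective dimension. -/
theorem exists_pdLT_of_isShortExact (N : ModuleCat.{u} B) [Module.Finite B N] :
    ∃ n : ℕ, ∀ (X Z C : ModuleCat.{u} B) (f : X →ₗ[B] Z) (g : Z →ₗ[B] C), IsShortExact f g →
      InAdd B N X → InAdd B N Z → FinitePd B C → PdLT B C n := by
  obtain ⟨ι, _, D, _, hD⟩ := exists_piPow N
  obtain ⟨n, hn⟩ := exists_syzygyRelations_le (D := D)
  let M : ModuleCat.{u} B := ModuleCat.of B ((i : ι) → D i)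
  have : Module.Finite B M := inferInstanceAs (Module.Finite B ((i : ι) → D i))
  obtain ⟨M', hM'⟩ := exists_isSyzygy n M
  have := hM'.finite
  have : Module.Finite B (ModuleCat.of B (M' × B)) := inferInstanceAs (Module.Finite B (M' × B))
  obtain ⟨d, hd⟩ := exists_pdLT_of_inAdd (ModuleCat.of B (M' × B))
  refine ⟨d + 3 + n, fun X Z C f g h hX hZ hC => ?_⟩
  have := hX.finite
  have := hZ.finite
  have : Module.Finite B C := Module.Finite.of_surjective g h.surj
  obtain ⟨a, ⟨ea⟩⟩ := hD X hX
  obtain ⟨b, ⟨eb⟩⟩ := hD Z hZ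
  obtain ⟨t, K₀, hKX, hKZ⟩ := h.exists_common_syzygy hC
  obtain ⟨a', b', ⟨K', ha', hb'⟩, hab⟩ := mem_syzygyRelations.1 (hn t (mem_syzygyRelations.2
    ⟨a, b, ⟨K₀, hKX.congr (.refl B K₀) ea, hKZ.congr (.refl B K₀) eb⟩, fun i => rfl⟩))
  have hab' : a + b' = b + a' := by
    funext i
    have := hab i
    simp only [Pi.add_apply]
    lia
  have : Module.Finite B (ModuleCat.of B (piPow D b)) :=
    inferInstanceAs (Module.Finite B (piPow D b))
  have : Module.Finite B (ModuleCat.of B (piPow D b')) :=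
    inferInstanceAs (Module.Finite B (piPow D b'))
  obtain ⟨Kb, hKb⟩ := exists_isSyzygy n (ModuleCat.of B (piPow D b))
  let K : ModuleCat.{u} B := ModuleCat.of B (Kb × K')
  have hKa : IsSyzygy n K (ModuleCat.of B (piPow D (a + b'))) := hab' ▸ hKb.piPow_add ha'
  let X₁ : ModuleCat.{u} B := ModuleCat.of B (X × piPow D b')
  let Z₁ : ModuleCat.{u} B := ModuleCat.of B (Z × piPow D b')
  have hX₁ : IsSyzygy n K X₁ :=
    hKa.congr (.refl B K) ((piPowAdd D a b').trans (ea.symm.prodCongr (.refl B _)))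
  have hZ₁ : IsSyzygy n K Z₁ := (hKb.piPow_add hb').congr (.refl B K)
    ((piPowAdd D b b').trans (eb.symm.prodCongr (.refl B _)))
  have h₁ : IsShortExact (X := X₁) (Y := Z₁) (f.prodMap (LinearMap.id : piPow D b' →ₗ[B] _))
      (g ∘ₗ LinearMap.fst B Z (piPow D b')) := by
    refine ⟨h.inj.prodMap Function.injective_id, fun z => ?_,
      h.surj.comp LinearMap.fst_surjective⟩
    refine (h.exact z.1).trans ⟨?_, ?_⟩
    · rintro ⟨x, hx⟩
      exact ⟨(x, z.2), Prod.ext hx rfl⟩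
    · rintro ⟨x, rfl⟩
      exact ⟨x.1, rfl⟩
  obtain ⟨L, hL⟩ := exists_isSyzygy n C
  obtain ⟨T, α, β, hT, hs⟩ := IsSyzygy.horseshoe (X := X₁) (Y := Z₁) h₁ hX₁ hL
  obtain ⟨P, Q, _, _, _, _, ⟨e⟩⟩ := hT.exists_equiv hZ₁
  have : Module.Finite B Z₁ := inferInstanceAs (Module.Finite B (Z × piPow D b'))
  have := hZ₁.finite
  have hKM : InAdd B (ModuleCat.of B (M' × B)) K :=
    IsSyzygy.inAdd (inAdd_piPow D _) hM' hKa
  refine hL.pdLT_add (pdLT_of_stable_equiv hs e (hL.finitePd hC) fun W hW hW' => hd W ?_ hW')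
  exact .of_isSummand (Y := ModuleCat.of B (K × Q)) hW
    (hKM.prod (inAdd_of_projective.right (N := M')))

end IgusaTodorov

section Extension

variable {B : Type u} [Ring B] [IsArtinianRing B]

/-- Extensions of modules with `m`-th syzygies in `add N₂` by modules in `add N₁` have uniformly
bounded projective dimension, as soon as it is finite. -/
theorem exists_pdLT_of_extension (N₁ N₂ : ModuleCat.{u} B) [Module.Finite B N₁]
    [Module.Finite B N₂] (m : ℕ) :
    ∃ n, ∀ (X Y Z : ModuleCat.{u} B) (f : X →ₗ[B] Y) (g : Y →ₗ[B] Z), IsShortExact f g →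
      InAdd B N₁ X → Module.Finite B Z → (∀ K, IsNthSyzygy B m K Z → InAdd B N₂ K) →
      FinitePd B Y → PdLT B Y n := by
  obtain ⟨K₁, hK₁⟩ := exists_isSyzygy m N₁
  obtain ⟨K₂, hK₂⟩ := exists_isSyzygyOne N₂
  have := hK₁.finite
  have := hK₂.finite
  let N : ModuleCat.{u} B := ModuleCat.of B (ModuleCat.of B (K₁ × B) × ModuleCat.of B (K₂ × B))
  have : Module.Finite B N := inferInstanceAs (Module.Finite B ((K₁ × B) × (K₂ × B)))
  obtain ⟨n, hn⟩ := exists_pdLT_of_isShortExact N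
  refine ⟨n + m, fun X Y Z f g h hX _ hZ hY => ?_⟩
  have := hX.finite
  obtain ⟨KX, hKX⟩ := exists_isSyzygy m X
  obtain ⟨KZ, _, hKZ⟩ := exists_isNthSyzygy m Z
  obtain ⟨T, a, b, hT, hs⟩ := IsSyzygy.horseshoe h hKX hKZ.isSyzygy
  obtain ⟨L, F, c, d, _, _, hL, hs'⟩ := hs.rotate
  refine hT.pdLT_add (hn L (ModuleCat.of B (KX × F)) T c d hs' ?_ ?_ (hT.finitePd hY))
  · exact (IsSyzygy.inAdd (hZ KZ hKZ) (IsSyzygy.one_iff.2 hK₂) (IsSyzygy.one_iff.2 hL)).right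
  · exact ((IsSyzygy.inAdd hX hK₁ hKX).prod
      (inAdd_of_projective.right (N := K₁))).left

end Extension

section Restriction

variable {R A : Type u} [CommRing R] [Ring A] [Algebra R A] (S : Subalgebra R A)

theorem InAdd.restrict {N X : ModuleCat.{u} A} (h : InAdd A N X) :
    InAdd S (ModuleCat.of S N) (ModuleCat.of S X) := by
  obtain ⟨k, i, p, hip⟩ := h
  exact ⟨k, i.restrictScalars S, p.restrictScalars S,
    LinearMap.ext fun x => LinearMap.congr_fun hip x⟩

variable {S} {J : Set A} {k : ℕ}

/-- The `A`-submodule of `A^k` generated by the products of elements of `J` and of `Y`. -/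
def spanSMul (J : Set A) (Y : Submodule S (Fin k → S)) : Submodule A (Fin k → A) :=
  Submodule.span A {u | ∃ x ∈ J, ∃ y ∈ Y, u = fun i => x * (y i : A)}

theorem exists_of_mem_spanSMul (hJ : J ⊆ S) (hJA : ∀ a : A, ∀ x ∈ J, a * x ∈ J)
    {Y : Submodule S (Fin k → S)} {u : Fin k → A} (hu : u ∈ spanSMul J Y) :
    ∃ y ∈ Y, ∀ i, (y i : A) = u i := by
  suffices H : ∀ a : A, ∃ y ∈ Y, ∀ i, (y i : A) = a * u i by simpa using H 1
  induction hu using Submodule.span_induction with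
  | mem u hu =>
    obtain ⟨x, hx, y, hy, rfl⟩ := hu
    exact fun a => ⟨(⟨a * x, hJ (hJA a x hx)⟩ : S) • y, Y.smul_mem _ hy,
      fun i => mul_assoc a x (y i)⟩
  | zero => exact fun a => ⟨0, Y.zero_mem, fun i => by simp⟩
  | add u v _ _ hu hv =>
    intro a
    obtain ⟨y, hy, hyu⟩ := hu a
    obtain ⟨z, hz, hzv⟩ := hv a
    exact ⟨y + z, Y.add_mem hy hz, fun i => by simp [hyu, hzv, mul_add]⟩
  | smul b u _ hu =>
    intro a
    obtain ⟨y, hy, hyu⟩ := hu (a * b)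
    exact ⟨y, hy, fun i => by simp [hyu, mul_assoc]⟩

theorem exists_linearMap_spanSMul (hJ : J ⊆ S) (hJA : ∀ a : A, ∀ x ∈ J, a * x ∈ J)
    (Y : Submodule S (Fin k → S)) :
    ∃ f : spanSMul J Y →ₗ[S] Y, Function.Injective f ∧
      ∀ x (hx : x ∈ J) (y : Y), (⟨x, hJ hx⟩ : S) • y ∈ LinearMap.range f := by
  have H (u : spanSMul J Y) : ∃ y : Y, ∀ i, (y.1 i : A) = u.1 i := by
    obtain ⟨y, hy, h⟩ := exists_of_mem_spanSMul hJ hJA u.2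
    exact ⟨⟨y, hy⟩, h⟩
  choose f hf using H
  have ext {y z : Y} (h : ∀ i, (y.1 i : A) = z.1 i) : y = z :=
    Subtype.ext (funext fun i => Subtype.ext (h i))
  refine ⟨{ toFun := f, map_add' := fun u v => ext fun i => ?_,
            map_smul' := fun b u => ext fun i => ?_ }, fun u v huv => ?_, fun x hx y => ?_⟩
  · simp [hf]
  · simp [hf, Subalgebra.smul_def]
  · have huv : f u = f v := huv
    exact Subtype.ext (funext fun i => by rw [← hf, ← hf, huv])
  · exact ⟨⟨_, Submodule.subset_span ⟨x, hx, y.1, y.2, rfl⟩⟩, ext fun i => hf _ i⟩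

theorem inAdd_of_oneSyzygyFinite [IsArtinianRing A] {N : ModuleCat.{u} A}
    (hN : ∀ X : ModuleCat.{u} A, Module.Finite A X → ∀ K, IsNthSyzygy A 1 K X → InAdd A N K)
    (U : Submodule A (Fin k → A)) : InAdd A (ModuleCat.of A (N × A)) (ModuleCat.of A U) := by
  let X : ModuleCat.{u} A := ModuleCat.of A ((Fin k → A) ⧸ U)
  have : Module.Finite A X := inferInstanceAs (Module.Finite A ((Fin k → A) ⧸ U))
  obtain ⟨K, _, hK⟩ := exists_isNthSyzygy 1 X
  have hU : IsSyzygy 1 (ModuleCat.of A U) X := IsSyzygy.one_iff.2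
    ⟨ModuleCat.of A (Fin k → A), U.subtype, U.mkQ,
      inferInstanceAs (Module.Projective A (Fin k → A)),
      inferInstanceAs (Module.Finite A (Fin k → A)), isShortExact_mkQ U⟩
  obtain ⟨P, Q, _, _, _, _, ⟨e⟩⟩ := hU.exists_equiv hK.isSyzygy
  refine .of_isSummand (Y := ModuleCat.of A (K × Q)) (IsSummand.fst.trans (.of_equiv e)) ?_
  exact (hN X this K hK).left.prod inAdd_of_projective.right

end Restriction

section Main

variable {R A : Type u} [CommRing R] [IsArtinianRing R] [Ring A] [Algebra R A] [Module.Finite R A]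

/-- If `J` is a left ideal of `A` contained in a subalgebra `S`, the algebra `A` is
1-syzygy-finite and the `S`-modules killed by `J` are syzygy-finite, then `S` has finite
finitistic dimension. -/
theorem finFinDim_of_oneSyzygyFinite (S : Subalgebra R A) (J : Set A) (hJ : J ⊆ S)
    (hJA : ∀ a : A, ∀ x ∈ J, a * x ∈ J) (h1 : OneSyzygyFinite A)
    (hq : SyzygyFiniteClass S (fun X => Module.Finite S X ∧
      ∀ x (hx : x ∈ J) (v : X), (⟨x, hJ hx⟩ : S) • v = 0)) : FinFinDim S := by
  have : Module.Finite R S := Module.Finite.of_injective S.val.toLinearMap Subtype.val_injective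
  have : IsArtinianRing S := IsArtinianRing.of_finite R S
  have : IsArtinianRing A := IsArtinianRing.of_finite R A
  have : Module.Finite S A := Module.Finite.of_restrictScalars_finite R S A
  obtain ⟨N, _, hN⟩ := h1
  obtain ⟨m, N₂, _, hN₂⟩ := hq
  let N₁ : ModuleCat.{u} S := ModuleCat.of S (ModuleCat.of A (N × A))
  have : Module.Finite S N₁ := Module.Finite.trans A (N × A)
  obtain ⟨n, hn⟩ := exists_pdLT_of_extension N₁ N₂ m
  refine ⟨n, fun M _ ⟨l, hl⟩ => projDimLE_of_pdLT ?_⟩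
  obtain ⟨k, q, hq⟩ := Module.Finite.exists_fin' S M
  have hs := isShortExact_ker q hq
  obtain ⟨f, hf, hfJ⟩ := exists_linearMap_spanSMul hJ hJA (LinearMap.ker q)
  let U : ModuleCat.{u} A := ModuleCat.of A (spanSMul J (LinearMap.ker q))
  let Y : ModuleCat.{u} S := ModuleCat.of S (LinearMap.ker q)
  let Z : ModuleCat.{u} S := ModuleCat.of S (LinearMap.ker q ⧸ LinearMap.range f)
  have hZ : Module.Finite S Z :=
    inferInstanceAs (Module.Finite S (LinearMap.ker q ⧸ LinearMap.range f))
  have hY : FinitePd S Y :=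
    ⟨l + 1, hs.pdLT_left (pdLT_of_projective (by lia)) ((pdLT_of_projDimLE hl).mono (by lia))⟩
  have hU : InAdd S N₁ (ModuleCat.of S U) := (inAdd_of_oneSyzygyFinite hN _).restrict S
  have hs' : IsShortExact (X := U) (Y := Y) (Z := Z) f (LinearMap.range f).mkQ :=
    ⟨hf, LinearMap.exact_map_mkQ_range f, Submodule.mkQ_surjective _⟩
  have hYn : PdLT S Y n := by
    refine hn (ModuleCat.of S U) Y Z _ _ hs' hU hZ (hN₂ Z ⟨hZ, fun x hx v => ?_⟩) hY
    obtain ⟨y, rfl⟩ := Submodule.mkQ_surjective _ v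
    exact (Submodule.Quotient.mk_eq_zero _).2 (hfJ x hx y)
  exact hs.pdLT_right hYn (pdLT_of_projective (by lia))

end Main

theorem prod_ofFn_rev_mem {R A : Type*} [CommRing R] [Ring A] [Algebra R A] (s : ℕ)
    (A' : Fin (s + 1) → Subalgebra R A) (I : Fin s → Set A)
    (hIsub : ∀ j : Fin s, I j ⊆ (A' j.castSucc : Set A))
    (hIleft : ∀ j : Fin s, ∀ x ∈ I j, ∀ a ∈ A' j.succ, a * x ∈ I j)
    (x : Fin s → A) (hx : ∀ j, x j ∈ I j) :
    (List.ofFn fun j : Fin s => x j.rev).prod ∈ A' 0 := by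
  induction s with
  | zero => simp [(A' 0).one_mem]
  | succ s ih =>
    rw [List.ofFn_succ', List.concat_eq_append, List.prod_append, List.prod_singleton, Fin.rev_last]
    refine hIsub 0 (hIleft 0 _ (hx 0) _ ?_)
    simpa only [Fin.rev_castSucc] using ih (fun j => A' j.succ) (fun j => I j.succ)
      (fun j => hIsub j.succ) (fun j => hIleft j.succ) (fun j => x j.succ) (fun j => hx j.succ)

theorem exists_prod_ofFn_rev_eq_mul {A : Type*} [Monoid A] {s : ℕ} (hs : 0 < s)
    (I : Fin s → Set A) (hI : ∀ j : Fin s, j.val + 1 = s → ∀ x ∈ I j, ∀ a : A, a * x ∈ I j)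
    (x : Fin s → A) (hx : ∀ j, x j ∈ I j) (a : A) :
    ∃ y : Fin s → A, (∀ j, y j ∈ I j) ∧
      (List.ofFn fun j : Fin s => y j.rev).prod =
        a * (List.ofFn fun j : Fin s => x j.rev).prod := by
  obtain ⟨s, rfl⟩ := Nat.exists_eq_succ_of_ne_zero hs.ne'
  refine ⟨Function.update x (Fin.last s) (a * x (Fin.last s)), fun j => ?_, ?_⟩
  · by_cases h : j = Fin.last s
    · subst h
      simpa using hI _ rfl _ (hx _) a
    · simpa [h] using hx j
  · simp [List.ofFn_succ, Fin.rev_zero, mul_assoc, Fin.rev_succ]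


variable {R : Type u} [CommRing R] [IsArtinianRing R]
  {A : Type u} [Ring A] [Algebra R A] [Module.Finite R A]

/-- Chain of subalgebras `B = A₀ ⊆ ⋯ ⊆ A_s = A` with `I_{i-1}` an ideal of
`A_{i-1}` which is a left ideal of `A_i`.  If `A` is 1-syzygy-finite and
`B/(I_{s-1} ⋯ I₁ I₀)` is `B`-syzygy-finite, then `fin.dim B < ∞`. -/
theorem statement13 (s : ℕ) (hs : 0 < s)
    (A' : Fin (s + 1) → Subalgebra R A)
    (hchain : ∀ j : Fin s, A' j.castSucc ≤ A' j.succ)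
    (htop : A' (Fin.last s) = ⊤)
    (I : Fin s → Set A)
    (hIsub : ∀ j : Fin s, I j ⊆ (A' j.castSucc : Set A))
    (hIzero : ∀ j : Fin s, (0 : A) ∈ I j)
    (hIadd : ∀ j : Fin s, ∀ x ∈ I j, ∀ y ∈ I j, x + y ∈ I j)
    (hIneg : ∀ j : Fin s, ∀ x ∈ I j, -x ∈ I j)
    (hIright : ∀ j : Fin s, ∀ x ∈ I j, ∀ b ∈ A' j.castSucc, x * b ∈ I j)
    (hIleft : ∀ j : Fin s, ∀ x ∈ I j, ∀ a ∈ A' j.succ, a * x ∈ I j)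
    (h1 : OneSyzygyFinite A)
    (hq : SyzygyFiniteClass ↥(A' 0) (fun X => Module.Finite ↥(A' 0) X ∧
      ∀ x : Fin s → A, (∀ j : Fin s, x j ∈ I j) →
        ∀ (hm : (List.ofFn fun j : Fin s => x j.rev).prod ∈ A' 0) (v : X),
          (⟨(List.ofFn fun j : Fin s => x j.rev).prod, hm⟩ : ↥(A' 0)) • v = 0)) :
    FinFinDim ↥(A' 0) := by
  have hmem := prod_ofFn_rev_mem s A' I hIsub hIleft
  refine finFinDim_of_oneSyzygyFinite (A' 0)
    {p | ∃ x : Fin s → A, (∀ j, x j ∈ I j) ∧ (List.ofFn fun j : Fin s => x j.rev).prod = p}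
    ?_ ?_ h1 ?_
  · rintro _ ⟨x, hx, rfl⟩
    exact hmem x hx
  · rintro a _ ⟨x, hx, rfl⟩
    refine exists_prod_ofFn_rev_eq_mul hs I (fun j hj y hy b => hIleft j y hy b ?_) x hx a
    have : j.succ = Fin.last s := Fin.ext hj
    rw [this, htop]
    exact Algebra.mem_top
  · obtain ⟨m, N, hN, h⟩ := hq
    refine ⟨m, N, hN, fun X hX => h X ⟨hX.1, fun x hx hm v => hX.2 _ ⟨x, hx, rfl⟩ v⟩⟩
end
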